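/- arXiv:0903.2508 — 3 statements merged into one kernel-verified Lean document; each statement's English description precedes it below -/
import Mathlib

section
/- Fix an integer d ≥ 2 and a real ε > 0. There exists a constant C > 0 (depending only on d and ε) such that for every power q of an odd prime, every subset A ⊆ F_q with |A| ≥ C·(q^{d/(2d−1)} + q^{(d²−d+4)/(2(d²−d+2))}), and every t ∈ F_q with t ≠ 0, one has |N_d(A;t) − |A|^{d²}/q| ≤ ε·|A|^{d²}/q. -/
/-- `matCount F d A t` is the number of `d × d` matrices over `F` all of whose entries
lie in `A` and whose determinant equals `t`. -/
noncomputable def matCount (F : Type) [CommRing F] [Fintype F] (d : ℕ) (A : Finset F) (t : F) : ℕ :=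
  Nat.card {M : Matrix (Fin d) (Fin d) F // (∀ i j, M i j ∈ A) ∧ M.det = t}

/-!
Expand the determinant along the first row: `det = x ⬝ᵥ c(M)`, where `x` is the first row, `M`
consists of the remaining rows and `c(M)` is its vector of signed maximal minors. For `t ≠ 0` only
the `M` with `c(M) ≠ 0` matter, and by Schwartz–Zippel all but a fraction `O(1 / |A|)` of the `M`
over `A` are of this kind. Write `a = |A|` and `q = |F|`.

**From determinants to an energy.** Apply Cauchy–Schwarz in `x ∈ A ^ d` and extend the sum over `x`
to all of `F ^ d`. For linearly independent `y`, `y'` the forms `x ⬝ᵥ y`, `x ⬝ᵥ y'` are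
independent, and for `y' = c • y`, `c ≠ 1`, they cannot both equal `t ≠ 0`; so only the pairs with
`c(M) = c(M')` contribute, and the squared error is at most `a ^ d * q ^ (d - 1)` times their
number. Such a pair is determined by two minors with the same nonzero determinant and one column
of `M`, so there are at most `d * a ^ (d - 1) * E (d - 1)` of them, where `E m` counts the pairs of
`m × m` matrices over `A` with the same nonzero determinant.

**The energy.** A dual version of the same argument, in which the discrepancy itself is the test
function, bounds the variance of the number of `m × m` matrices over `A` with determinant `t` by
`a ^ m * q ^ (m - 1)` times the number of pairs with *parallel* vectors `c(M)`. Then the rows of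
both matrices lie on one hyperplane, so this number is, up to a factor `O(1 / q)`, at most the sum
of `h ^ (2 * (m - 1))` over all normal vectors, `h` being the number of points of `A ^ m` on the
hyperplane. Finally `h ≤ a ^ (m - 1)`, and the variance of `h` is controlled by the pairs of
parallel vectors in `A ^ m`. This gives
`q * E m = O (a ^ (2 * m ^ 2) + q ^ (2 * m - 2) * a ^ (2 * m ^ 2 - 4 * m + 5))` for `m ≥ 2`, while
`E 1 ≤ a`.

**Exponents.** With `m = d - 1`, the first term is admissible when `a ^ (2 * d - 1)` exceeds
`q ^ d` by a large constant factor; the second term requires `q ^ 5` to be small against `a ^ 8`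
when `d = 3` and nothing new when `d ≥ 4`; for `d = 2` the condition is that `q ^ 3` is small
against `a ^ 4`.
-/

namespace RestrictedDet

open Finset Matrix
open Fintype (balance balance_apply expect_balance)
open scoped BigOperators

section Expectation

lemma expect_comp_of_surjective {G H M : Type*} [AddGroup G] [AddGroup H] [Fintype G] [Fintype H]
    [AddCommMonoid M] [Module ℚ≥0 M] (φ : G →+ H) (hφ : Function.Surjective φ) (f : H → M) :
    𝔼 x, f (φ x) = 𝔼 y, f y := by
  have translate (y : H) : 𝔼 x, f (φ x + y) = 𝔼 x, f (φ x) := by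
    obtain ⟨g, rfl⟩ := hφ y
    exact Fintype.expect_equiv (Equiv.addRight g) _ _ fun x => by simp
  calc 𝔼 x, f (φ x) = 𝔼 y, 𝔼 x, f (φ x + y) := by simp only [translate, Fintype.expect_const]
    _ = 𝔼 x, 𝔼 y, f (φ x + y) := Finset.expect_comm ..
    _ = 𝔼 _x : G, 𝔼 y, f y :=
      Finset.expect_congr rfl fun x _ =>
        Fintype.expect_equiv (Equiv.addLeft (φ x)) _ _ fun _ => rfl
    _ = 𝔼 y, f y := Fintype.expect_const _

lemma expect_balance_mul_balance {α : Type*} [Fintype α] (f g : α → ℝ) :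
    𝔼 x, balance f x * balance g x = 𝔼 x, f x * g x - (𝔼 x, f x) * 𝔼 x, g x := by
  have h (x : α) : balance f x * balance g x =
      f x * g x - (𝔼 y, f y) * g x - (𝔼 y, g y) * balance f x := by
    simp only [balance_apply]; ring
  simp only [h, Finset.expect_sub_distrib, ← Finset.mul_expect, expect_balance, mul_zero, sub_zero]

variable {α : Type*} [Fintype α] [DecidableEq α]

/-- The point mass at `t` with its mean subtracted. -/
noncomputable def centeredIndicator (t : α) : α → ℝ := balance (Pi.single t 1)

lemma centeredIndicator_apply (t s : α) :
    centeredIndicator t s = (if s = t then 1 else 0) - 1 / (Fintype.card α : ℝ) := by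
  simp [centeredIndicator, balance_apply, Pi.single_apply]

lemma expect_centeredIndicator (t : α) : 𝔼 s, centeredIndicator t s = 0 :=
  expect_balance _

lemma expect_centeredIndicator_mul (t u : α) :
    𝔼 s, centeredIndicator t s * centeredIndicator u s =
      (if t = u then 1 / (Fintype.card α : ℝ) else 0) - 1 / (Fintype.card α : ℝ) ^ 2 := by
  unfold centeredIndicator
  rw [expect_balance_mul_balance]
  simp only [Fintype.expect_eq_sum_div_card, Pi.single_apply, mul_ite, mul_one, mul_zero,
    sum_ite_eq', mem_univ, if_true, eq_comm (a := u)]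
  split_ifs <;> ring

lemma sum_mul_centeredIndicator (f : α → ℝ) (t : α) :
    ∑ s, f s * centeredIndicator t s = balance f t := by
  simp [centeredIndicator_apply, mul_sub, balance_apply, Fintype.expect_eq_sum_div_card,
    ← Finset.sum_mul, div_eq_mul_inv]

end Expectation

section LinearForms

variable {F n ι : Type*} [Field F] [Fintype n]

lemma surjective_dotProduct_of_linearIndependent [Finite ι] {v : ι → n → F}
    (hv : LinearIndependent F v) : Function.Surjective fun (x : n → F) i => x ⬝ᵥ v i := by
  have := Fintype.ofFinite ι
  have hrange : LinearMap.range (Matrix.of v).mulVecLin = ⊤ := by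
    apply Submodule.eq_top_of_finrank_eq
    rw [Module.finrank_fintype_fun_eq_card]
    exact hv.rank_matrix
  intro w
  obtain ⟨x, hx⟩ := LinearMap.range_eq_top.mp hrange w
  exact ⟨x, funext fun i => (dotProduct_comm _ _).trans (congrFun hx i)⟩

variable [Fintype F] [DecidableEq n]

lemma expect_dotProduct_of_linearIndependent [Fintype ι] [DecidableEq ι] {v : ι → n → F}
    (hv : LinearIndependent F v) (f : (ι → F) → ℝ) :
    𝔼 x : n → F, f (fun i => x ⬝ᵥ v i) = 𝔼 w, f w :=
  expect_comp_of_surjective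
    (AddMonoidHom.mk' (fun (x : n → F) i => x ⬝ᵥ v i) fun x y => by
      ext i; exact add_dotProduct x y (v i))
    (surjective_dotProduct_of_linearIndependent hv) f

lemma expect_dotProduct {y : n → F} (hy : y ≠ 0) (f : F → ℝ) :
    𝔼 x : n → F, f (x ⬝ᵥ y) = 𝔼 s, f s := by
  have hind : LinearIndependent F fun _ : Unit => y := LinearIndependent.of_subsingleton () hy
  rw [expect_dotProduct_of_linearIndependent hind fun w => f (w ())]
  exact Fintype.expect_equiv (Equiv.funUnique Unit F) _ _ fun _ => rfl

lemma expect_mul_dotProduct_of_linearIndependent {y z : n → F}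
    (h : LinearIndependent F ![y, z]) (f g : F → ℝ) :
    𝔼 x : n → F, f (x ⬝ᵥ y) * g (x ⬝ᵥ z) = (𝔼 s, f s) * 𝔼 s, g s := by
  rw [Fintype.expect_mul_expect, ← Finset.expect_product', Finset.univ_product_univ]
  refine (expect_dotProduct_of_linearIndependent h fun w => f (w 0) * g (w 1)).trans ?_
  exact Fintype.expect_equiv (finTwoArrowEquiv F) _ _ fun _ => rfl

lemma expect_mul_dotProduct_of_not_parallel {y z : n → F} (hy : y ≠ 0) (hz : z ≠ 0)
    (hyz : ∀ c : Fˣ, c • y ≠ z) {f : F → ℝ} (hf : 𝔼 s, f s = 0) :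
    𝔼 x : n → F, f (x ⬝ᵥ y) * f (x ⬝ᵥ z) = 0 := by
  have hind : LinearIndependent F ![y, z] := by
    refine (LinearIndependent.pair_iff' hy).mpr fun c hc => ?_
    rcases eq_or_ne c 0 with rfl | hc0
    · exact hz (by rw [← hc, zero_smul])
    · exact hyz (Units.mk0 c hc0) hc
  rw [expect_mul_dotProduct_of_linearIndependent hind, hf, zero_mul]

lemma expect_mul_dotProduct_smul {y : n → F} (hy : y ≠ 0) (c : F) (f : F → ℝ) :
    𝔼 x : n → F, f (x ⬝ᵥ y) * f (x ⬝ᵥ (c • y)) = 𝔼 s, f s * f (c * s) := by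
  simp only [dotProduct_smul, smul_eq_mul]
  exact expect_dotProduct hy fun s => f s * f (c * s)

lemma expect_mul_dilate_le (f : F → ℝ) (c : Fˣ) :
    𝔼 s, f s * f (c * s) ≤ 𝔼 s, f s ^ 2 := by
  have hdilate : 𝔼 s, f (c * s) ^ 2 = 𝔼 s, f s ^ 2 :=
    Fintype.expect_equiv (Units.mulLeft c) _ _ fun _ => rfl
  calc 𝔼 s, f s * f (c * s) ≤ 𝔼 s, (f s ^ 2 + f (c * s) ^ 2) / 2 :=
        Finset.expect_le_expect fun s _ => by linarith [two_mul_le_add_sq (f s) (f (c * s))]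
    _ = 𝔼 s, f s ^ 2 := by
        rw [← Finset.expect_div, Finset.expect_add_distrib, hdilate, add_self_div_two]

lemma expect_sq_sum_dotProduct (S : Finset ι) (v : ι → n → F) (f : F → ℝ) :
    𝔼 x : n → F, (∑ i ∈ S, f (x ⬝ᵥ v i)) ^ 2 =
      ∑ p ∈ S ×ˢ S, 𝔼 x : n → F, f (x ⬝ᵥ v p.1) * f (x ⬝ᵥ v p.2) := by
  rw [← Finset.expect_sum_comm]
  simp only [sq, Finset.sum_mul_sum, Finset.sum_product]

lemma sq_sum_sum_dotProduct_le (X : Finset (n → F)) (S : Finset ι) {v : ι → n → F} {f : F → ℝ}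
    {B : ℝ} (hB : 𝔼 x : n → F, (∑ i ∈ S, f (x ⬝ᵥ v i)) ^ 2 ≤ B) :
    (∑ x ∈ X, ∑ i ∈ S, f (x ⬝ᵥ v i)) ^ 2 ≤
      #X * ((Fintype.card F : ℝ) ^ Fintype.card n * B) := by
  have hcard : (Fintype.card F : ℝ) ^ Fintype.card n = Fintype.card (n → F) := by simp
  calc (∑ x ∈ X, ∑ i ∈ S, f (x ⬝ᵥ v i)) ^ 2
      ≤ #X * ∑ x ∈ X, (∑ i ∈ S, f (x ⬝ᵥ v i)) ^ 2 := sq_sum_le_card_mul_sum_sq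
    _ ≤ #X * ∑ x, (∑ i ∈ S, f (x ⬝ᵥ v i)) ^ 2 := by
        gcongr
        exact Finset.subset_univ X
    _ ≤ #X * ((Fintype.card F : ℝ) ^ Fintype.card n * B) := by
        rw [hcard, ← Fintype.card_mul_expect]
        gcongr

variable [DecidableEq F]

lemma expect_sq_sum_dotProduct_le (S : Finset ι) {v : ι → n → F} (hv : ∀ i ∈ S, v i ≠ 0)
    {f : F → ℝ} (hf : 𝔼 s, f s = 0) :
    𝔼 x : n → F, (∑ i ∈ S, f (x ⬝ᵥ v i)) ^ 2 ≤
      #{p ∈ S ×ˢ S | ∃ c : Fˣ, c • v p.1 = v p.2} * 𝔼 s, f s ^ 2 := by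
  rw [expect_sq_sum_dotProduct, Finset.card_filter, Nat.cast_sum, Finset.sum_mul]
  refine Finset.sum_le_sum fun p hp => ?_
  obtain ⟨hp₁, hp₂⟩ := Finset.mem_product.mp hp
  split_ifs with hpar
  · obtain ⟨c, hc⟩ := hpar
    rw [← hc, Units.smul_def, expect_mul_dotProduct_smul (hv _ hp₁), Nat.cast_one, one_mul]
    exact expect_mul_dilate_le f c
  · rw [Nat.cast_zero, zero_mul]
    exact (expect_mul_dotProduct_of_not_parallel (hv _ hp₁) (hv _ hp₂)
      (not_exists.mp hpar) hf).le

lemma expect_sq_centeredIndicator_le {α : Type*} [Fintype α] [DecidableEq α] (t : α) :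
    𝔼 s, centeredIndicator t s ^ 2 ≤ 1 / (Fintype.card α : ℝ) := by
  simp only [sq, expect_centeredIndicator_mul, if_true]
  exact sub_le_self _ (by positivity)

lemma expect_centeredIndicator_mul_dilate_nonpos {t c : F} (ht : t ≠ 0) (hc : c ≠ 0)
    (hc1 : c ≠ 1) : 𝔼 s, centeredIndicator t s * centeredIndicator t (c * s) ≤ 0 := by
  have hdilate (s : F) : centeredIndicator t (c * s) = centeredIndicator (c⁻¹ * t) s := by
    simp only [centeredIndicator_apply, eq_inv_mul_iff_mul_eq₀ hc]
  have hne : t ≠ c⁻¹ * t := fun h =>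
    hc1 (inv_eq_one.mp ((mul_eq_right₀ ht).mp h.symm))
  simp only [hdilate, expect_centeredIndicator_mul, if_neg hne, zero_sub, Left.neg_nonpos_iff]
  positivity

/- The forms `v i` and `c • v i` with `c ≠ 1` never take a nonzero value `t` simultaneously, so
parallel but distinct pairs contribute nonpositively. -/
lemma expect_sq_sum_centeredIndicator_dotProduct_le (S : Finset ι) {v : ι → n → F}
    (hv : ∀ i ∈ S, v i ≠ 0) {t : F} (ht : t ≠ 0) :
    𝔼 x : n → F, (∑ i ∈ S, centeredIndicator t (x ⬝ᵥ v i)) ^ 2 ≤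
      #{p ∈ S ×ˢ S | v p.1 = v p.2} * (1 / (Fintype.card F : ℝ)) := by
  rw [expect_sq_sum_dotProduct, Finset.card_filter, Nat.cast_sum, Finset.sum_mul]
  refine Finset.sum_le_sum fun p hp => ?_
  obtain ⟨hp₁, hp₂⟩ := Finset.mem_product.mp hp
  split_ifs with heq
  · simp only [← heq, ← sq, Nat.cast_one, one_mul]
    rw [expect_dotProduct (hv _ hp₁) fun s => centeredIndicator t s ^ 2]
    exact expect_sq_centeredIndicator_le t
  rw [Nat.cast_zero, zero_mul]
  by_cases hpar : ∃ c : Fˣ, c • v p.1 = v p.2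
  · obtain ⟨c, hc⟩ := hpar
    have hc1 : (c : F) ≠ 1 := fun h => heq (by rw [← hc, Units.smul_def, h, one_smul])
    rw [← hc, Units.smul_def, expect_mul_dotProduct_smul (hv _ hp₁)]
    exact expect_centeredIndicator_mul_dilate_nonpos ht c.ne_zero hc1
  · exact (expect_mul_dotProduct_of_not_parallel (hv _ hp₁) (hv _ hp₂)
      (not_exists.mp hpar) (expect_centeredIndicator t)).le

end LinearForms

section Incidences

variable {F n ι : Type*} [Field F] [DecidableEq F] [Fintype n]

/-- The number of pairs of a point `x ∈ X` and an index `i ∈ S` with `x ⬝ᵥ v i = t`, that is, of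
incidences between the points of `X` and the affine hyperplanes `v i = t`. -/
def incidenceCount (X : Finset (n → F)) (S : Finset ι) (v : ι → n → F) (t : F) : ℕ :=
  #{p ∈ X ×ˢ S | p.1 ⬝ᵥ v p.2 = t}

variable [Fintype F]

lemma sum_incidenceCount_mul (X : Finset (n → F)) (S : Finset ι) (v : ι → n → F) (g : F → ℝ) :
    ∑ t, (incidenceCount X S v t : ℝ) * g t = ∑ x ∈ X, ∑ i ∈ S, g (x ⬝ᵥ v i) := by
  rw [← Finset.sum_product', ← Finset.sum_fiberwise' _ fun p : (n → F) × ι => p.1 ⬝ᵥ v p.2]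
  simp only [Finset.sum_const, nsmul_eq_mul, incidenceCount]

/-- The deviation of `incidenceCount X S v t` from its mean over `t`. -/
noncomputable def incidenceDiscrepancy (X : Finset (n → F)) (S : Finset ι) (v : ι → n → F) :
    F → ℝ :=
  balance fun t => (incidenceCount X S v t : ℝ)

lemma expect_incidenceCount (X : Finset (n → F)) (S : Finset ι) (v : ι → n → F) :
    𝔼 t, (incidenceCount X S v t : ℝ) = #X * #S / Fintype.card F := by
  rw [Fintype.expect_eq_sum_div_card]
  simpa using congrArg (· / (Fintype.card F : ℝ)) (sum_incidenceCount_mul X S v 1)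

lemma card_mul_sq_incidenceDiscrepancy_le (X : Finset (n → F)) (S : Finset ι) {v : ι → n → F}
    (hv : ∀ i ∈ S, v i ≠ 0) {t : F} (ht : t ≠ 0) :
    (Fintype.card F : ℝ) * incidenceDiscrepancy X S v t ^ 2 ≤
      #X * (Fintype.card F : ℝ) ^ Fintype.card n * #{p ∈ S ×ˢ S | v p.1 = v p.2} := by
  classical
  have hq : (0 : ℝ) < Fintype.card F := by exact_mod_cast Fintype.card_pos
  have h := sq_sum_sum_dotProduct_le X S (expect_sq_sum_centeredIndicator_dotProduct_le S hv ht)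
  rw [← sum_incidenceCount_mul, sum_mul_centeredIndicator] at h
  calc _ ≤ (Fintype.card F : ℝ) * _ := mul_le_mul_of_nonneg_left h hq.le
    _ = _ := by field_simp

/- Bounding each `t` by itself would lose a factor `q`. Instead the discrepancy `D` serves as its
own test function: `∑ t, D t ^ 2` is the sum of `D (x ⬝ᵥ v i)` over all `x` and `i`. -/
lemma card_mul_sum_sq_incidenceDiscrepancy_le (X : Finset (n → F)) (S : Finset ι)
    {v : ι → n → F} (hv : ∀ i ∈ S, v i ≠ 0) :
    (Fintype.card F : ℝ) * ∑ t, incidenceDiscrepancy X S v t ^ 2 ≤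
      #X * (Fintype.card F : ℝ) ^ Fintype.card n *
        #{p ∈ S ×ˢ S | ∃ c : Fˣ, c • v p.1 = v p.2} := by
  classical
  set D := incidenceDiscrepancy X S v
  have hq : (0 : ℝ) < Fintype.card F := by exact_mod_cast Fintype.card_pos
  have hself : ∑ t, D t ^ 2 = ∑ x ∈ X, ∑ i ∈ S, D (x ⬝ᵥ v i) := by
    have hsum : ∑ t, D t = 0 := Fintype.sum_balance _
    calc ∑ t, D t ^ 2
        = ∑ t, (incidenceCount X S v t : ℝ) * D t -
            (𝔼 t, (incidenceCount X S v t : ℝ)) * ∑ t, D t := by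
          rw [Finset.mul_sum, ← Finset.sum_sub_distrib]
          exact Finset.sum_congr rfl fun t _ => by rw [sq, ← sub_mul]; rfl
      _ = ∑ x ∈ X, ∑ i ∈ S, D (x ⬝ᵥ v i) := by
          rw [hsum, mul_zero, sub_zero, sum_incidenceCount_mul]
  have hsq := sq_sum_sum_dotProduct_le X S
    (expect_sq_sum_dotProduct_le S hv (f := D) (expect_balance _))
  rw [← hself, Fintype.expect_eq_sum_div_card] at hsq
  rcases (Finset.sum_nonneg fun t _ => sq_nonneg (D t)).eq_or_lt with h | h
  · rw [← h, mul_zero]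
    positivity
  · refine le_of_mul_le_mul_right ?_ h
    calc _ = (Fintype.card F : ℝ) * (∑ t, D t ^ 2) ^ 2 := by ring
      _ ≤ (Fintype.card F : ℝ) * _ := mul_le_mul_of_nonneg_left hsq hq.le
      _ = _ := by field_simp

lemma card_mul_sum_sq_incidenceCount_le (X : Finset (n → F)) (S : Finset ι) {v : ι → n → F}
    (hv : ∀ i ∈ S, v i ≠ 0) :
    (Fintype.card F : ℝ) * ∑ t, (incidenceCount X S v t : ℝ) ^ 2 ≤
      ((#X : ℝ) * #S) ^ 2 + #X * (Fintype.card F : ℝ) ^ Fintype.card n *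
        #{p ∈ S ×ˢ S | ∃ c : Fˣ, c • v p.1 = v p.2} := by
  have hq : (Fintype.card F : ℝ) ≠ 0 := Nat.cast_ne_zero.mpr Fintype.card_ne_zero
  have hvar : (Fintype.card F : ℝ) * ∑ t, (incidenceCount X S v t : ℝ) ^ 2 =
      (#X * #S) ^ 2 + (Fintype.card F : ℝ) * ∑ t, incidenceDiscrepancy X S v t ^ 2 := by
    have h := expect_balance_mul_balance (fun t => (incidenceCount X S v t : ℝ))
      fun t => (incidenceCount X S v t : ℝ)
    simp only [← sq, expect_incidenceCount] at h
    simp only [Fintype.expect_eq_sum_div_card, div_pow] at h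
    unfold incidenceDiscrepancy
    field_simp at h
    linarith
  rw [hvar]
  exact add_le_add_right (card_mul_sum_sq_incidenceDiscrepancy_le X S hv) _

end Incidences

section RestrictedMatrices

lemma eq_of_dotProduct_eq {n R : Type*} [Fintype n] [CommRing R] [IsDomain R] {x y z : n → R}
    {i : n} (hz : z i ≠ 0) (hxy : ∀ j ≠ i, x j = y j) (h : x ⬝ᵥ z = y ⬝ᵥ z) :
    x = y := by
  have hsub : (x - y) ⬝ᵥ z = (x i - y i) * z i :=
    Finset.sum_eq_single_of_mem i (Finset.mem_univ i) fun j _ hj => by simp [hxy j hj]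
  rw [sub_dotProduct, h, sub_self, zero_eq_mul, sub_eq_zero, or_iff_left hz] at hsub
  funext j
  rcases eq_or_ne j i with rfl | hj
  exacts [hsub, hxy j hj]

lemma totalDegree_det_mvPolynomialX_le (m R : Type*) [Fintype m] [DecidableEq m] [CommRing R] :
    (det (mvPolynomialX m m R)).totalDegree ≤ Fintype.card m := by
  rw [det_apply']
  refine MvPolynomial.totalDegree_finsetSum_le fun σ _ => ?_
  rw [← map_intCast (MvPolynomial.C : R →+* _), ← Finset.card_univ, Finset.card_eq_sum_ones]
  refine ((MvPolynomial.IsHomogeneous.prod _ _ _ fun i _ => ?_).C_mul _).totalDegree_le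
  exact MvPolynomial.isHomogeneous_X R _

variable {R : Type*}

/-- The finset of vectors all of whose coordinates lie in `A`. -/
def vectors (n : Type*) [Fintype n] [DecidableEq n] (A : Finset R) : Finset (n → R) :=
  Fintype.piFinset fun _ => A

/-- The finset of matrices all of whose entries lie in `A`. -/
def matrices (m n : Type*) [Fintype m] [DecidableEq m] [Fintype n] [DecidableEq n]
    (A : Finset R) : Finset (Matrix m n R) :=
  Fintype.piFinset fun _ => vectors n A

variable {m n : Type*} [Fintype m] [DecidableEq m] [Fintype n] [DecidableEq n] {A : Finset R}

lemma mem_vectors {x : n → R} : x ∈ vectors n A ↔ ∀ i, x i ∈ A :=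
  Fintype.mem_piFinset

lemma mem_matrices {M : Matrix m n R} : M ∈ matrices m n A ↔ ∀ i j, M i j ∈ A :=
  Fintype.mem_piFinset.trans (forall_congr' fun _ => mem_vectors)

lemma card_vectors (n : Type*) [Fintype n] [DecidableEq n] (A : Finset R) :
    #(vectors n A) = #A ^ Fintype.card n := by
  simp [vectors]

lemma card_matrices (m n : Type*) [Fintype m] [DecidableEq m] [Fintype n] [DecidableEq n]
    (A : Finset R) : #(matrices m n A) = #A ^ (Fintype.card m * Fintype.card n) :=
  (Fintype.card_piFinset fun _ : m => vectors n A).trans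
    (by simp [card_vectors, ← pow_mul, mul_comm])

variable [CommRing R] [IsDomain R] [DecidableEq R]

lemma card_dotProduct_eq_le (A : Finset R) {z : n → R} (hz : z ≠ 0) (t : R) :
    #{x ∈ vectors n A | x ⬝ᵥ z = t} ≤ #A ^ (Fintype.card n - 1) := by
  obtain ⟨i, hi⟩ := Function.ne_iff.mp hz
  calc #{x ∈ vectors n A | x ⬝ᵥ z = t} ≤ #(vectors {j // j ≠ i} A) := by
        refine Finset.card_le_card_of_injOn (fun x j => x j) (fun x hx => ?_)
          fun x hx y hy hxy => ?_
        · exact mem_vectors.mpr fun j => mem_vectors.mp (Finset.mem_filter.mp hx).1 j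
        · exact eq_of_dotProduct_eq hi (fun j hj => congrFun hxy ⟨j, hj⟩)
            ((Finset.mem_filter.mp hx).2.trans (Finset.mem_filter.mp hy).2.symm)
    _ = #A ^ (Fintype.card n - 1) := by
        rw [card_vectors, Fintype.card_subtype_compl, Fintype.card_subtype_eq]

lemma card_mul_card_eval_eq_zero_le {p : MvPolynomial n R} (hp : p ≠ 0) (A : Finset R) :
    #A * #{x ∈ vectors n A | MvPolynomial.eval x p = 0} ≤
      p.totalDegree * #A ^ Fintype.card n := by
  let e := Fintype.equivFin n
  have hcard : #{x ∈ vectors n A | MvPolynomial.eval x p = 0} =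
      #{x ∈ Fintype.piFinset fun _ : Fin (Fintype.card n) => A |
        MvPolynomial.eval x (MvPolynomial.renameEquiv R e p) = 0} := by
    refine Finset.card_equiv (e.arrowCongr (Equiv.refl R)) fun x => ?_
    have hx : (e.arrowCongr (Equiv.refl R)) x ∘ e = x := funext fun i => by simp
    simp [mem_vectors, MvPolynomial.eval_rename, hx, e.forall_congr_left]
  rcases A.eq_empty_or_nonempty with rfl | hA
  · simp
  have hsz := MvPolynomial.schwartz_zippel_totalDegree
    ((map_ne_zero_iff _ (MvPolynomial.renameEquiv R e).injective).mpr hp) A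
  rw [← hcard, MvPolynomial.totalDegree_renameEquiv, div_le_div_iff₀ (by positivity)
    (by positivity)] at hsz
  rw [mul_comm]
  exact_mod_cast hsz

/-- The number of square matrices over `A` with determinant `t`. -/
def detCount (m : Type*) [Fintype m] [DecidableEq m] (A : Finset R) (t : R) : ℕ :=
  #{M ∈ matrices m m A | M.det = t}

lemma card_mul_detCount_zero_le (m : Type*) [Fintype m] [DecidableEq m] (A : Finset R) :
    #A * detCount m A 0 ≤ Fintype.card m * #A ^ (Fintype.card m * Fintype.card m) := by
  have hcard : detCount m A 0 =
      #{x ∈ vectors (m × m) A | MvPolynomial.eval x (det (mvPolynomialX m m R)) = 0} := by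
    refine Finset.card_equiv (Equiv.curry m m R).symm fun M => ?_
    simp only [Finset.mem_filter, mem_matrices, mem_vectors, eval_det_mvPolynomialX]
    exact and_congr_left fun _ =>
      (Prod.forall (p := fun p : m × m => M p.1 p.2 ∈ A)).symm
  rw [hcard, ← Fintype.card_prod]
  exact (card_mul_card_eval_eq_zero_le (det_mvPolynomialX_ne_zero m R) A).trans
    (Nat.mul_le_mul_right _ (totalDegree_det_mvPolynomialX_le m R))

end RestrictedMatrices

section Cofactors

variable {R : Type*} [CommRing R] {m : ℕ}

/-- The vector of signed maximal minors of an `m × (m + 1)` matrix: its dot product with a row `x`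
is the determinant of the square matrix obtained by putting `x` on top. -/
def cofactorVector (M : Matrix (Fin m) (Fin (m + 1)) R) : Fin (m + 1) → R :=
  fun j => (-1) ^ (j : ℕ) * (M.submatrix id j.succAbove).det

lemma det_cons_eq_dotProduct_cofactorVector (x : Fin (m + 1) → R)
    (M : Matrix (Fin m) (Fin (m + 1)) R) :
    (Matrix.of (vecCons x M)).det = x ⬝ᵥ cofactorVector M := by
  rw [det_succ_row_zero]
  exact Finset.sum_congr rfl fun j _ => by rw [cofactorVector, mul_left_comm, ← mul_assoc]; rfl

lemma row_dotProduct_cofactorVector (M : Matrix (Fin m) (Fin (m + 1)) R) (i : Fin m) :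
    M i ⬝ᵥ cofactorVector M = 0 := by
  rw [← det_cons_eq_dotProduct_cofactorVector]
  exact det_zero_of_row_eq (Fin.succ_ne_zero i).symm rfl

lemma cofactorVector_eq_zero_iff {M : Matrix (Fin m) (Fin (m + 1)) R} {j : Fin (m + 1)} :
    cofactorVector M j = 0 ↔ (M.submatrix id j.succAbove).det = 0 := by
  simp only [cofactorVector]
  exact IsUnit.mul_right_eq_zero (isUnit_one.neg.pow _)

lemma eq_of_submatrix_succAbove_eq {α : Type*} {M N : Matrix (Fin m) (Fin (m + 1)) α}
    {j : Fin (m + 1)} (hcol : ∀ i, M i j = N i j)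
    (hminor : M.submatrix id j.succAbove = N.submatrix id j.succAbove) : M = N := by
  ext i k
  rcases Fin.eq_self_or_eq_succAbove j k with rfl | ⟨l, rfl⟩
  exacts [hcol i, congrFun₂ hminor i l]

lemma eq_of_cofactorVector_eq [IsDomain R] {M N : Matrix (Fin m) (Fin (m + 1)) R}
    {j : Fin (m + 1)} (hj : cofactorVector N j ≠ 0) (h : cofactorVector M = cofactorVector N)
    (hminor : M.submatrix id j.succAbove = N.submatrix id j.succAbove) : M = N := by
  funext i
  refine eq_of_dotProduct_eq hj (fun k hk => ?_) ?_
  · obtain ⟨l, rfl⟩ := Fin.exists_succAbove_eq hk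
    exact congrFun₂ hminor i l
  · rw [row_dotProduct_cofactorVector, ← h, row_dotProduct_cofactorVector]

variable [DecidableEq R] (m) (A : Finset R)

/-- The `m × (m + 1)` matrices over `A` of full rank, encoded as those with a nonzero maximal
minor. -/
def fullRank : Finset (Matrix (Fin m) (Fin (m + 1)) R) :=
  {M ∈ matrices (Fin m) (Fin (m + 1)) A | cofactorVector M ≠ 0}

/-- The number of pairs of `m × m` matrices over `A` with the same nonzero determinant. -/
def detEnergy : ℕ :=
  #{p ∈ matrices (Fin m) (Fin m) A ×ˢ matrices (Fin m) (Fin m) A |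
    p.1.det = p.2.det ∧ p.1.det ≠ 0}

variable {m A}

lemma mem_fullRank {M : Matrix (Fin m) (Fin (m + 1)) R} :
    M ∈ fullRank m A ↔ (∀ i j, M i j ∈ A) ∧ cofactorVector M ≠ 0 := by
  rw [fullRank, Finset.mem_filter, mem_matrices]

variable (m A)

lemma detCount_eq_card_dotProduct_cofactorVector (t : R) :
    detCount (Fin (m + 1)) A t =
      #{p ∈ vectors (Fin (m + 1)) A ×ˢ matrices (Fin m) (Fin (m + 1)) A |
        p.1 ⬝ᵥ cofactorVector p.2 = t} := by
  symm
  refine Finset.card_equiv ((Fin.consEquiv fun _ => Fin (m + 1) → R).trans Matrix.of) ?_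
  rintro ⟨x, M⟩
  simp only [Finset.mem_filter, Finset.mem_product, mem_vectors, mem_matrices,
    ← det_cons_eq_dotProduct_cofactorVector]
  exact and_congr_left fun _ => (Fin.forall_fin_succ (P := fun i => ∀ j, vecCons x M i j ∈ A)).symm

lemma detCount_eq_incidenceCount {F : Type*} [Field F] [DecidableEq F] (A : Finset F)
    {t : F} (ht : t ≠ 0) :
    detCount (Fin (m + 1)) A t =
      incidenceCount (vectors (Fin (m + 1)) A) (fullRank m A) cofactorVector t := by
  rw [detCount_eq_card_dotProduct_cofactorVector, incidenceCount]
  congr 1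
  ext ⟨x, M⟩
  simp only [Finset.mem_filter, Finset.mem_product, fullRank, and_assoc]
  refine and_congr_right fun _ => and_congr_right fun _ => (and_iff_right_of_imp ?_).symm
  rintro h h0
  exact ht (by rw [← h, h0, dotProduct_zero])

lemma card_cofactorVector_eq_zero_le :
    #{M ∈ matrices (Fin m) (Fin (m + 1)) A | cofactorVector M = 0} ≤
      #A ^ m * detCount (Fin m) A 0 := by
  calc _ ≤ #(vectors (Fin m) A ×ˢ {U ∈ matrices (Fin m) (Fin m) A | U.det = 0}) := by
        refine Finset.card_le_card_of_injOn
          (fun M => (fun i => M i 0, M.submatrix id (Fin.succAbove 0))) (fun M hM => ?_)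
          fun M _ N _ h => ?_
        · simp only [coe_filter, Set.mem_ofPred_eq, mem_matrices] at hM
          simp only [coe_product, coe_filter, Set.mem_prod, mem_coe, mem_vectors, mem_matrices,
            Set.mem_ofPred_eq]
          exact ⟨fun i => hM.1 _ _, fun i j => hM.1 _ _,
            cofactorVector_eq_zero_iff.mp (congrFun hM.2 0)⟩
        · obtain ⟨hcol, hminor⟩ := Prod.mk.inj h
          exact eq_of_submatrix_succAbove_eq (congrFun hcol) hminor
    _ = #A ^ m * detCount (Fin m) A 0 := by
        rw [Finset.card_product, card_vectors, Fintype.card_fin, detCount]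

lemma pow_mul_card_fullRank_le :
    (#A : ℝ) ^ (m + 1) * #(fullRank m A) ≤ (#A : ℝ) ^ ((m + 1) ^ 2) := by
  have hcard : #(fullRank m A) ≤ #A ^ (m * (m + 1)) := by
    have h := card_matrices (Fin m) (Fin (m + 1)) A
    simp only [Fintype.card_fin] at h
    exact h ▸ Finset.card_le_card (Finset.filter_subset _ _)
  calc (#A : ℝ) ^ (m + 1) * #(fullRank m A) ≤ (#A : ℝ) ^ (m + 1) * (#A : ℝ) ^ (m * (m + 1)) := by
        gcongr
        exact_mod_cast hcard
    _ = (#A : ℝ) ^ ((m + 1) ^ 2) := by ring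

variable [IsDomain R]

lemma card_mul_pow_le_card_fullRank :
    #A * #A ^ (m * (m + 1)) ≤ #A * #(fullRank m A) + m * #A ^ (m * (m + 1)) := by
  have hsplit : #A ^ (m * (m + 1)) = #(fullRank m A) +
      #{M ∈ matrices (Fin m) (Fin (m + 1)) A | cofactorVector M = 0} := by
    have hcard := card_matrices (Fin m) (Fin (m + 1)) A
    simp only [Fintype.card_fin] at hcard
    rw [← hcard, ← Finset.card_filter_add_card_filter_not fun M => cofactorVector M ≠ 0]
    simp only [fullRank, not_not]
  have hsingular := card_mul_detCount_zero_le (Fin m) A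
  rw [Fintype.card_fin] at hsingular
  calc #A * #A ^ (m * (m + 1)) ≤ #A * (#(fullRank m A) + #A ^ m * detCount (Fin m) A 0) := by
        rw [hsplit]
        gcongr
        exact card_cofactorVector_eq_zero_le m A
    _ = #A * #(fullRank m A) + #A ^ m * (#A * detCount (Fin m) A 0) := by ring
    _ ≤ #A * #(fullRank m A) + #A ^ m * (m * #A ^ (m * m)) := by gcongr
    _ = #A * #(fullRank m A) + m * #A ^ (m * (m + 1)) := by ring

lemma card_cofactorVector_eq_apply_ne_zero_le (j : Fin (m + 1)) :
    #{p ∈ fullRank m A ×ˢ fullRank m A |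
        cofactorVector p.1 = cofactorVector p.2 ∧ cofactorVector p.1 j ≠ 0} ≤
      #A ^ m * detEnergy m A := by
  have hcard : #A ^ m = #(vectors (Fin m) A) := by rw [card_vectors, Fintype.card_fin]
  rw [detEnergy, hcard, ← Finset.card_product]
  refine Finset.card_le_card_of_injOn (fun p => (fun i => p.1 i j,
    p.1.submatrix id j.succAbove, p.2.submatrix id j.succAbove)) (fun p hp => ?_) ?_
  · simp only [coe_filter, Set.mem_ofPred_eq, mem_product, mem_fullRank] at hp
    obtain ⟨⟨⟨hA₁, -⟩, hA₂, -⟩, heq, hj⟩ := hp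
    simp only [coe_product, coe_filter, Set.mem_prod, mem_coe, mem_product, mem_vectors,
      mem_matrices, Set.mem_ofPred_eq]
    refine ⟨fun i => hA₁ _ _, ⟨fun i l => hA₁ _ _, fun i l => hA₂ _ _⟩, ?_,
      mt cofactorVector_eq_zero_iff.mpr hj⟩
    exact (isUnit_one.neg.pow _).mul_left_cancel (congrFun heq j)
  · rintro ⟨M, N⟩ hp ⟨M', N'⟩ hp' h
    simp only [coe_filter, Set.mem_ofPred_eq] at hp hp'
    simp only [Prod.mk.injEq] at h
    obtain ⟨hcol, hminor, hminor'⟩ := h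
    obtain rfl : M = M' := eq_of_submatrix_succAbove_eq (congrFun hcol) hminor
    have hN : cofactorVector N = cofactorVector N' := hp.2.1.symm.trans hp'.2.1
    rw [eq_of_cofactorVector_eq (hp'.2.1 ▸ hp'.2.2) hN hminor']

lemma card_cofactorVector_eq_le :
    #{p ∈ fullRank m A ×ˢ fullRank m A | cofactorVector p.1 = cofactorVector p.2} ≤
      (m + 1) * (#A ^ m * detEnergy m A) := by
  classical
  calc _ ≤ #(univ.biUnion fun j : Fin (m + 1) => {p ∈ fullRank m A ×ˢ fullRank m A |
          cofactorVector p.1 = cofactorVector p.2 ∧ cofactorVector p.1 j ≠ 0}) := by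
        refine Finset.card_le_card fun p hp => ?_
        obtain ⟨hp, heq⟩ := Finset.mem_filter.mp hp
        obtain ⟨j, hj⟩ := Function.ne_iff.mp (mem_fullRank.mp (Finset.mem_product.mp hp).1).2
        exact Finset.mem_biUnion.mpr ⟨j, mem_univ j, Finset.mem_filter.mpr ⟨hp, heq, hj⟩⟩
    _ ≤ #(univ : Finset (Fin (m + 1))) * (#A ^ m * detEnergy m A) :=
        Finset.card_biUnion_le_card_mul _ _ _ fun j _ =>
          card_cofactorVector_eq_apply_ne_zero_le m A j
    _ = (m + 1) * (#A ^ m * detEnergy m A) := by rw [Finset.card_univ, Fintype.card_fin]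

end Cofactors

section Hyperplanes

variable {F : Type*} [Field F] [DecidableEq F] (n : Type*) [Fintype n] [DecidableEq n]
  (A : Finset F)

/-- The number of vectors over `A` on the hyperplane orthogonal to `z`. -/
def hyperplaneCount (z : n → F) : ℕ := #{x ∈ vectors n A | x ⬝ᵥ z = 0}

variable {n}

lemma card_matrices_orthogonal (m : Type*) [Fintype m] [DecidableEq m] (z : n → F) :
    #{M ∈ matrices m n A | ∀ i, M i ⬝ᵥ z = 0} = hyperplaneCount n A z ^ Fintype.card m := by
  have hrows : {M ∈ matrices m n A | ∀ i, M i ⬝ᵥ z = 0} =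
      Fintype.piFinset fun _ : m => {x ∈ vectors n A | x ⬝ᵥ z = 0} := by
    ext M
    refine Iff.trans ?_ Fintype.mem_piFinset.symm
    simp only [Finset.mem_filter, mem_matrices, mem_vectors, forall_and]
  rw [hrows]
  exact (Fintype.card_piFinset _).trans (by simp [hyperplaneCount])

variable (n) [Fintype F]

/-- The deviation from its mean over `z` of the number of nonzero vectors over `A` orthogonal to
`z`. The zero vector is left out because it is orthogonal to every `z`. -/
noncomputable def hyperplaneDeviation (z : n → F) : ℝ :=
  ∑ x ∈ vectors n A with x ≠ 0, centeredIndicator 0 (z ⬝ᵥ x)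

variable {n}

lemma card_parallel_le {x : n → F} (hx : x ≠ 0) :
    #{y ∈ vectors n A | ∃ c : Fˣ, c • x = y} ≤ #A := by
  obtain ⟨i, hi⟩ := Function.ne_iff.mp hx
  refine Finset.card_le_card_of_injOn (fun y => y i) (fun y hy => ?_) fun y hy z hz hyz => ?_
  · exact mem_vectors.mp (Finset.mem_filter.mp hy).1 i
  · obtain ⟨c, rfl⟩ := (Finset.mem_filter.mp hy).2
    obtain ⟨d, rfl⟩ := (Finset.mem_filter.mp hz).2
    rw [Units.ext (mul_right_cancel₀ hi hyz)]

lemma card_mul_sum_sq_hyperplaneDeviation_le :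
    (Fintype.card F : ℝ) * ∑ z, hyperplaneDeviation n A z ^ 2 ≤
      (Fintype.card F : ℝ) ^ Fintype.card n * (#A : ℝ) ^ (Fintype.card n + 1) := by
  set S := {x ∈ vectors n A | x ≠ 0}
  have hpairs : #{p ∈ S ×ˢ S | ∃ c : Fˣ, c • p.1 = p.2} ≤ #A ^ (Fintype.card n + 1) := by
    calc #{p ∈ S ×ˢ S | ∃ c : Fˣ, c • p.1 = p.2} = ∑ x ∈ S, #{y ∈ S | ∃ c : Fˣ, c • x = y} := by
          simp only [Finset.card_filter, Finset.sum_product]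
      _ ≤ ∑ _x ∈ S, #A := Finset.sum_le_sum fun x hx =>
          (Finset.card_le_card (Finset.filter_subset_filter _ (Finset.filter_subset _ _))).trans
            (card_parallel_le A (Finset.mem_filter.mp hx).2)
      _ ≤ #A ^ (Fintype.card n + 1) := by
          rw [Finset.sum_const, smul_eq_mul, pow_succ, ← card_vectors]
          gcongr
          exact Finset.filter_subset _ _
  have hmean := (expect_sq_sum_dotProduct_le S (v := id) (fun x hx => (Finset.mem_filter.mp hx).2)
    (expect_centeredIndicator (0 : F))).trans (mul_le_mul (Nat.cast_le.mpr hpairs)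
      (expect_sq_centeredIndicator_le _) (by positivity) (by positivity))
  have hq : (0 : ℝ) < Fintype.card F := Nat.cast_pos.mpr Fintype.card_pos
  rw [Fintype.expect_eq_sum_div_card, Fintype.card_fun, div_le_iff₀ (by positivity)] at hmean
  calc _ ≤ (Fintype.card F : ℝ) * _ := mul_le_mul_of_nonneg_left hmean hq.le
    _ = _ := by push_cast; field_simp

variable {A} (hA : (Fintype.card F : ℝ) ≤ (#A : ℝ) ^ Fintype.card n)

include hA in
lemma hyperplaneCount_le (z : n → F) :
    (hyperplaneCount n A z : ℝ) ≤ hyperplaneDeviation n A z +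
      2 * ((#A : ℝ) ^ Fintype.card n / Fintype.card F) := by
  have hq : (0 : ℝ) < Fintype.card F := Nat.cast_pos.mpr Fintype.card_pos
  set S := {x ∈ vectors n A | x ≠ 0}
  set N := #{x ∈ S | z ⬝ᵥ x = 0}
  have hdev : hyperplaneDeviation n A z = N - #S / Fintype.card F := by
    simp [hyperplaneDeviation, centeredIndicator_apply, S, N, div_eq_mul_inv]
  have hcount : (hyperplaneCount n A z : ℝ) ≤ N + 1 := by
    have hsub : {x ∈ vectors n A | x ⬝ᵥ z = 0} ⊆ insert 0 {x ∈ S | z ⬝ᵥ x = 0} := by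
      intro x hx
      rw [Finset.mem_insert]
      refine or_iff_not_imp_left.mpr fun hx0 => ?_
      obtain ⟨hxA, hxz⟩ := Finset.mem_filter.mp hx
      exact Finset.mem_filter.mpr ⟨Finset.mem_filter.mpr ⟨hxA, hx0⟩, dotProduct_comm z x ▸ hxz⟩
    exact_mod_cast (Finset.card_le_card hsub).trans (Finset.card_insert_le _ _)
  have hS : (#S : ℝ) / Fintype.card F ≤ (#A : ℝ) ^ Fintype.card n / Fintype.card F := by
    rw [← Nat.cast_pow, ← card_vectors]
    gcongr
    exact Finset.filter_subset _ _
  have hone : 1 ≤ (#A : ℝ) ^ Fintype.card n / Fintype.card F := (one_le_div hq).mpr hA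
  linarith

include hA in
lemma hyperplaneCount_pow_le (r : ℕ) {z : n → F} (hz : z ≠ 0) :
    (hyperplaneCount n A z : ℝ) ^ (r + 2) ≤
      (4 * ((#A : ℝ) ^ Fintype.card n / Fintype.card F)) ^ (r + 2) +
        4 * (#A : ℝ) ^ ((Fintype.card n - 1) * r) * hyperplaneDeviation n A z ^ 2 := by
  have hmean := hyperplaneCount_le hA z
  set μ : ℝ := (#A : ℝ) ^ Fintype.card n / Fintype.card F
  have htriv : (hyperplaneCount n A z : ℝ) ≤ (#A : ℝ) ^ (Fintype.card n - 1) := by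
    exact_mod_cast card_dotProduct_eq_le A hz 0
  have hnonneg : (0 : ℝ) ≤ hyperplaneCount n A z := Nat.cast_nonneg _
  rcases le_total (hyperplaneCount n A z : ℝ) (4 * μ) with hle | hge
  · exact (pow_le_pow_left₀ hnonneg hle _).trans (le_add_of_nonneg_right (by positivity))
  · have hdev : (hyperplaneCount n A z : ℝ) ≤ 2 * hyperplaneDeviation n A z := by linarith
    calc (hyperplaneCount n A z : ℝ) ^ (r + 2)
        = (hyperplaneCount n A z : ℝ) ^ r * (hyperplaneCount n A z : ℝ) ^ 2 := pow_add _ _ _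
      _ ≤ ((#A : ℝ) ^ (Fintype.card n - 1)) ^ r * (2 * hyperplaneDeviation n A z) ^ 2 := by gcongr
      _ = 4 * (#A : ℝ) ^ ((Fintype.card n - 1) * r) * hyperplaneDeviation n A z ^ 2 := by
          rw [← pow_mul]; ring
      _ ≤ _ := le_add_of_nonneg_left (by positivity)

include hA in
lemma card_mul_sum_hyperplaneCount_pow_le (r : ℕ) :
    (Fintype.card F : ℝ) * ∑ z : n → F with z ≠ 0, (hyperplaneCount n A z : ℝ) ^ (r + 2) ≤
      (Fintype.card F : ℝ) ^ Fintype.card n * (Fintype.card F *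
          (4 * ((#A : ℝ) ^ Fintype.card n / Fintype.card F)) ^ (r + 2) +
        4 * (#A : ℝ) ^ ((Fintype.card n - 1) * r + Fintype.card n + 1)) := by
  set μ : ℝ := (#A : ℝ) ^ Fintype.card n / Fintype.card F
  set b : ℝ := (#A : ℝ) ^ ((Fintype.card n - 1) * r) with hb
  calc (Fintype.card F : ℝ) * ∑ z : n → F with z ≠ 0, (hyperplaneCount n A z : ℝ) ^ (r + 2)
      ≤ Fintype.card F * ∑ z : n → F with z ≠ 0,
          ((4 * μ) ^ (r + 2) + 4 * b * hyperplaneDeviation n A z ^ 2) := by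
        gcongr with z hz
        exact hyperplaneCount_pow_le hA r (Finset.mem_filter.mp hz).2
    _ ≤ Fintype.card F * ∑ z : n → F,
          ((4 * μ) ^ (r + 2) + 4 * b * hyperplaneDeviation n A z ^ 2) := by
        gcongr
        exact Finset.filter_subset _ _
    _ = (Fintype.card F : ℝ) ^ Fintype.card n * (Fintype.card F * (4 * μ) ^ (r + 2)) +
          4 * b * (Fintype.card F * ∑ z, hyperplaneDeviation n A z ^ 2) := by
        have hcard : (Fintype.card (n → F) : ℝ) = (Fintype.card F : ℝ) ^ Fintype.card n := by simp
        rw [Finset.sum_add_distrib, ← Finset.mul_sum, Finset.sum_const, Finset.card_univ,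
          nsmul_eq_mul, hcard]
        ring
    _ ≤ (Fintype.card F : ℝ) ^ Fintype.card n * (Fintype.card F * (4 * μ) ^ (r + 2)) +
          4 * b * ((Fintype.card F : ℝ) ^ Fintype.card n * (#A : ℝ) ^ (Fintype.card n + 1)) :=
        add_le_add_right (mul_le_mul_of_nonneg_left (card_mul_sum_sq_hyperplaneDeviation_le A)
          (by positivity)) _
    _ = _ := by rw [hb]; ring

end Hyperplanes

section Energy

variable {F : Type*} [Field F] [Fintype F] [DecidableEq F] {m : ℕ}

lemma card_sub_one_le_card_common_normal {M N : Matrix (Fin m) (Fin (m + 1)) F}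
    (hM : cofactorVector M ≠ 0) {c : Fˣ} (hMN : c • cofactorVector M = cofactorVector N) :
    Fintype.card F - 1 ≤
      #{z | z ≠ 0 ∧ (∀ i, M i ⬝ᵥ z = 0) ∧ ∀ i, N i ⬝ᵥ z = 0} := by
  rw [← Fintype.card_units, ← Finset.card_univ]
  refine Finset.card_le_card_of_injOn (fun s : Fˣ => (s : F) • cofactorVector M) (fun s _ => ?_)
    fun s _ s' _ h => Units.ext (smul_left_injective F hM h)
  have hN : cofactorVector M = c⁻¹ • cofactorVector N := by rw [← hMN, inv_smul_smul]
  refine Finset.mem_coe.mpr (Finset.mem_filter.mpr ⟨Finset.mem_univ _, smul_ne_zero s.ne_zero hM,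
    fun i => ?_, fun i => ?_⟩)
  · rw [dotProduct_smul, row_dotProduct_cofactorVector, smul_zero]
  · rw [hN, dotProduct_smul, dotProduct_smul, row_dotProduct_cofactorVector, smul_zero, smul_zero]

variable (m) (A : Finset F)

/-- The number of pairs of full-rank `m × (m + 1)` matrices over `A` with parallel cofactor
vectors, that is, with the same row space. -/
def parallelCount : ℕ :=
  #{p ∈ fullRank m A ×ˢ fullRank m A | ∃ c : Fˣ, c • cofactorVector p.1 = cofactorVector p.2}

/- Double counting of the pairs together with a common normal vector of all their rows: every pair
has at least `q - 1` of these, the nonzero multiples of its cofactor vectors. -/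
lemma card_sub_one_mul_parallelCount_le :
    (Fintype.card F - 1) * parallelCount m A ≤
      ∑ z : Fin (m + 1) → F with z ≠ 0, hyperplaneCount (Fin (m + 1)) A z ^ (2 * m) := by
  rw [parallelCount]
  set P := {p ∈ fullRank m A ×ˢ fullRank m A |
    ∃ c : Fˣ, c • cofactorVector p.1 = cofactorVector p.2} with hP
  let IsNormal (p : Matrix (Fin m) (Fin (m + 1)) F × Matrix (Fin m) (Fin (m + 1)) F)
    (z : Fin (m + 1) → F) : Prop := (∀ i, p.1 i ⬝ᵥ z = 0) ∧ ∀ i, p.2 i ⬝ᵥ z = 0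
  calc (Fintype.card F - 1) * #P = ∑ _p ∈ P, (Fintype.card F - 1) := by
        rw [Finset.sum_const, smul_eq_mul, mul_comm]
    _ ≤ ∑ p ∈ P, #{z : Fin (m + 1) → F | z ≠ 0 ∧ IsNormal p z} := by
        refine Finset.sum_le_sum fun p hp => ?_
        obtain ⟨hp, c, hc⟩ := Finset.mem_filter.mp hp
        exact card_sub_one_le_card_common_normal
          (mem_fullRank.mp (Finset.mem_product.mp hp).1).2 hc
    _ = ∑ z : Fin (m + 1) → F with z ≠ 0, #{p ∈ P | IsNormal p z} := by
        simp only [← Finset.filter_filter]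
        exact Finset.sum_card_bipartiteAbove_eq_sum_card_bipartiteBelow IsNormal
    _ ≤ ∑ z : Fin (m + 1) → F with z ≠ 0, hyperplaneCount (Fin (m + 1)) A z ^ (2 * m) := by
        refine Finset.sum_le_sum fun z _ => ?_
        have hcard := card_matrices_orthogonal A (Fin m) z
        rw [Fintype.card_fin] at hcard
        rw [two_mul, pow_add, ← hcard, ← Finset.card_product]
        refine Finset.card_le_card fun p hp => ?_
        simp only [hP, fullRank, Finset.mem_filter, Finset.mem_product, IsNormal] at hp ⊢
        exact ⟨⟨hp.1.1.1.1, hp.2.1⟩, hp.1.1.2.1, hp.2.2⟩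

variable (p : ℕ)

variable {A} in
lemma pow_mul_parallelCount_le (hA : (Fintype.card F : ℝ) ≤ (#A : ℝ) ^ (p + 2)) :
    (#A : ℝ) ^ (p + 2) * (Fintype.card F : ℝ) ^ (p + 2) * parallelCount (p + 1) A ≤
      2 * 4 ^ (2 * p + 2) * (Fintype.card F * (#A : ℝ) ^ ((p + 2) * (2 * p + 3))) +
        8 * ((Fintype.card F : ℝ) ^ (2 * p + 2) * (#A : ℝ) ^ (2 * p ^ 2 + 4 * p + 5)) := by
  have hhyp := card_mul_sum_hyperplaneCount_pow_le (n := Fin (p + 2)) (A := A)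
    (by rwa [Fintype.card_fin]) (2 * p)
  have hpar : ((Fintype.card F : ℝ) - 1) * parallelCount (p + 1) A ≤
      ∑ z : Fin (p + 2) → F with z ≠ 0,
        (hyperplaneCount (Fin (p + 2)) A z : ℝ) ^ (2 * p + 2) := by
    rw [← Nat.cast_one, ← Nat.cast_sub Fintype.card_pos]
    exact_mod_cast card_sub_one_mul_parallelCount_le (p + 1) A
  have hq2 : (2 : ℝ) ≤ Fintype.card F := by exact_mod_cast Fintype.one_lt_card (α := F)
  rw [Fintype.card_fin] at hhyp
  set q : ℝ := (Fintype.card F : ℝ)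
  set a : ℝ := (#A : ℝ)
  set G : ℝ := (parallelCount (p + 1) A : ℝ)
  set H : ℝ := ∑ z : Fin (p + 2) → F with z ≠ 0,
    (hyperplaneCount (Fin (p + 2)) A z : ℝ) ^ (2 * p + 2)
  have hGH : q * G ≤ 2 * H := by
    have hG : 0 ≤ G := Nat.cast_nonneg _
    nlinarith
  calc a ^ (p + 2) * q ^ (p + 2) * G = a ^ (p + 2) * q ^ (p + 1) * (q * G) := by ring
    _ ≤ a ^ (p + 2) * q ^ (p + 1) * (2 * H) := by gcongr
    _ = 2 * (a ^ (p + 2) * q ^ p) * (q * H) := by ring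
    _ ≤ 2 * (a ^ (p + 2) * q ^ p) * (q ^ (p + 2) * (q * (4 * (a ^ (p + 2) / q)) ^ (2 * p + 2) +
          4 * a ^ ((p + 2 - 1) * (2 * p) + (p + 2) + 1))) :=
        mul_le_mul_of_nonneg_left hhyp (by positivity)
    _ = 2 * 4 ^ (2 * p + 2) * (q * a ^ ((p + 2) * (2 * p + 3))) +
          8 * (q ^ (2 * p + 2) * a ^ (2 * p ^ 2 + 4 * p + 5)) := by
        rw [Nat.add_succ_sub_one, mul_pow, div_pow, ← pow_mul]
        field_simp
        ring

lemma detEnergy_eq_sum : detEnergy m A = ∑ t with t ≠ 0, detCount (Fin m) A t ^ 2 := by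
  rw [detEnergy, Finset.card_eq_sum_card_fiberwise (f := fun p => p.1.det) (t := {t | t ≠ 0})
    fun p hp => by simpa using (Finset.mem_filter.mp hp).2.2]
  refine Finset.sum_congr rfl fun t ht => ?_
  rw [sq, detCount, ← Finset.card_product]
  congr 1
  ext p
  have ht0 := (Finset.mem_filter.mp ht).2
  simp only [Finset.mem_filter, Finset.mem_product]
  grind

lemma card_mul_detEnergy_succ_le :
    (Fintype.card F : ℝ) * detEnergy (m + 1) A ≤ (#A : ℝ) ^ (2 * (m + 1) ^ 2) +
      (#A : ℝ) ^ (m + 1) * (Fintype.card F : ℝ) ^ (m + 1) * parallelCount m A := by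
  have hsecond := card_mul_sum_sq_incidenceCount_le (vectors (Fin (m + 1)) A) (fullRank m A)
    fun M hM => (mem_fullRank.mp hM).2
  rw [card_vectors, Fintype.card_fin, Nat.cast_pow] at hsecond
  calc (Fintype.card F : ℝ) * detEnergy (m + 1) A
      = (Fintype.card F : ℝ) * ∑ t : F with t ≠ 0, (incidenceCount (vectors (Fin (m + 1)) A)
          (fullRank m A) cofactorVector t : ℝ) ^ 2 := by
        rw [detEnergy_eq_sum]
        push_cast
        congr 1
        exact Finset.sum_congr rfl fun t ht => by
          rw [detCount_eq_incidenceCount m A (Finset.mem_filter.mp ht).2]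
    _ ≤ (Fintype.card F : ℝ) * ∑ t : F, (incidenceCount (vectors (Fin (m + 1)) A)
          (fullRank m A) cofactorVector t : ℝ) ^ 2 := by
        gcongr
        exact Finset.filter_subset _ _
    _ ≤ _ := hsecond
    _ ≤ _ := by
        refine add_le_add ?_ le_rfl
        calc _ ≤ ((#A : ℝ) ^ ((m + 1) ^ 2)) ^ 2 := by
              gcongr
              exact pow_mul_card_fullRank_le m A
          _ = _ := by ring

variable {A} in
lemma card_mul_detEnergy_le (hA : (Fintype.card F : ℝ) ≤ (#A : ℝ) ^ (p + 2)) :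
    (Fintype.card F : ℝ) * detEnergy (p + 2) A ≤ 4 ^ (2 * p + 3) *
      ((#A : ℝ) ^ (2 * (p + 2) ^ 2) +
        (Fintype.card F : ℝ) ^ (2 * p + 2) * (#A : ℝ) ^ (2 * p ^ 2 + 4 * p + 5)) := by
  have henergy := card_mul_detEnergy_succ_le (p + 1) A
  have hpar := pow_mul_parallelCount_le p hA
  set q : ℝ := (Fintype.card F : ℝ)
  set a : ℝ := (#A : ℝ)
  set T := q ^ (2 * p + 2) * a ^ (2 * p ^ 2 + 4 * p + 5)
  set k : ℝ := 4 ^ (2 * p + 2)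
  have hk : 4 ≤ k := le_self_pow₀ (by norm_num) (by omega)
  have hmain : q * a ^ ((p + 2) * (2 * p + 3)) ≤ a ^ (2 * (p + 2) ^ 2) := by
    calc _ ≤ a ^ (p + 2) * a ^ ((p + 2) * (2 * p + 3)) := by gcongr
      _ = _ := by ring
  calc _ ≤ a ^ (2 * (p + 2) ^ 2) + (2 * k * (q * a ^ ((p + 2) * (2 * p + 3))) + 8 * T) :=
        henergy.trans (add_le_add_right hpar _)
    _ ≤ a ^ (2 * (p + 2) ^ 2) + (2 * k * a ^ (2 * (p + 2) ^ 2) + 8 * T) := by gcongr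
    _ = (1 + 2 * k) * a ^ (2 * (p + 2) ^ 2) + 8 * T := by ring
    _ ≤ (k * 4) * a ^ (2 * (p + 2) ^ 2) + (k * 4) * T := by gcongr <;> linarith
    _ = 4 ^ (2 * p + 3) * (a ^ (2 * (p + 2) ^ 2) + T) := by rw [pow_succ]; ring

lemma detEnergy_one_le {R : Type*} [CommRing R] [DecidableEq R] (A : Finset R) :
    detEnergy 1 A ≤ #A := by
  refine Finset.card_le_card_of_injOn (fun p => p.1 0 0) (fun p hp => ?_)
    fun p hp p' hp' h => ?_
  · simp only [coe_filter, Set.mem_ofPred_eq, mem_product, mem_matrices] at hp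
    exact hp.1.1 0 0
  · simp only [coe_filter, Set.mem_ofPred_eq, det_unique, Fin.default_eq_zero] at hp hp'
    have h₂ : p.2 0 0 = p'.2 0 0 := hp.2.1.symm.trans (h.trans hp'.2.1)
    ext i j <;> rw [Subsingleton.elim i 0, Subsingleton.elim j 0]
    exacts [h, h₂]

end Energy

section Asymptotics

variable {F : Type*} [Field F] [Fintype F] [DecidableEq F] (m : ℕ) {A : Finset F} {t : F} {ε : ℝ}

variable (A) in
lemma sq_card_mul_detCount_sub_le (ht : t ≠ 0) :
    ((Fintype.card F : ℝ) * detCount (Fin (m + 1)) A t -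
        (#A : ℝ) ^ (m + 1) * #(fullRank m A)) ^ 2 ≤
      (m + 1) * (#A : ℝ) ^ (2 * m + 1) * (Fintype.card F : ℝ) ^ (m + 1) *
        (Fintype.card F * detEnergy m A) := by
  have hq : (Fintype.card F : ℝ) ≠ 0 := Nat.cast_ne_zero.mpr Fintype.card_ne_zero
  have hdisc := card_mul_sq_incidenceDiscrepancy_le (vectors (Fin (m + 1)) A) (fullRank m A)
    (fun M hM => (mem_fullRank.mp hM).2) ht
  rw [incidenceDiscrepancy, balance_apply, expect_incidenceCount,
    ← detCount_eq_incidenceCount m A ht, card_vectors, Fintype.card_fin, Nat.cast_pow] at hdisc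
  calc _ = (Fintype.card F : ℝ) * (Fintype.card F * (detCount (Fin (m + 1)) A t -
          (#A : ℝ) ^ (m + 1) * #(fullRank m A) / Fintype.card F) ^ 2) := by field_simp
    _ ≤ (Fintype.card F : ℝ) * ((#A : ℝ) ^ (m + 1) * (Fintype.card F : ℝ) ^ (m + 1) *
          ((m + 1) * (#A ^ m * detEnergy m A) : ℕ)) := by
        refine mul_le_mul_of_nonneg_left (hdisc.trans ?_) (Nat.cast_nonneg _)
        gcongr
        exact card_cofactorVector_eq_le m A
    _ = _ := by push_cast; ring

variable {m}

lemma abs_card_mul_detCount_sub_le (ht : t ≠ 0) (hε : 0 ≤ ε)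
    (henergy : 4 * (m + 1) * (Fintype.card F : ℝ) ^ (m + 1) * (Fintype.card F * detEnergy m A) ≤
      ε ^ 2 * (#A : ℝ) ^ (2 * m ^ 2 + 2 * m + 1)) :
    |(Fintype.card F : ℝ) * detCount (Fin (m + 1)) A t -
        (#A : ℝ) ^ (m + 1) * #(fullRank m A)| ≤ ε / 2 * (#A : ℝ) ^ ((m + 1) ^ 2) := by
  refine abs_le_of_sq_le_sq ((sq_card_mul_detCount_sub_le m A ht).trans ?_) (by positivity)
  calc _ = (#A : ℝ) ^ (2 * m + 1) / 4 * (4 * (m + 1) * (Fintype.card F : ℝ) ^ (m + 1) *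
          (Fintype.card F * detEnergy m A)) := by ring
    _ ≤ (#A : ℝ) ^ (2 * m + 1) / 4 * (ε ^ 2 * (#A : ℝ) ^ (2 * m ^ 2 + 2 * m + 1)) := by
        gcongr
    _ = (ε / 2 * (#A : ℝ) ^ ((m + 1) ^ 2)) ^ 2 := by ring

lemma abs_pow_mul_card_fullRank_sub_le {R : Type*} [CommRing R] [IsDomain R] [DecidableEq R]
    {A : Finset R} (hA : A.Nonempty) (hm : 2 * m ≤ ε * #A) :
    |(#A : ℝ) ^ (m + 1) * #(fullRank m A) - (#A : ℝ) ^ ((m + 1) ^ 2)| ≤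
      ε / 2 * (#A : ℝ) ^ ((m + 1) ^ 2) := by
  have ha : (0 : ℝ) < #A := Nat.cast_pos.mpr hA.card_pos
  have hrank : (#A : ℝ) * (#A : ℝ) ^ (m * (m + 1)) ≤
      #A * #(fullRank m A) + m * (#A : ℝ) ^ (m * (m + 1)) := by
    exact_mod_cast card_mul_pow_le_card_fullRank m A
  rw [abs_sub_comm, abs_of_nonneg (sub_nonneg.mpr (pow_mul_card_fullRank_le m A))]
  refine le_of_mul_le_mul_left ?_ ha
  calc (#A : ℝ) * ((#A : ℝ) ^ ((m + 1) ^ 2) - (#A : ℝ) ^ (m + 1) * #(fullRank m A))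
      = (#A : ℝ) ^ (m + 1) * (#A * (#A : ℝ) ^ (m * (m + 1)) - #A * #(fullRank m A)) := by ring
    _ ≤ (#A : ℝ) ^ (m + 1) * (m * (#A : ℝ) ^ (m * (m + 1))) := by
        gcongr
        linarith
    _ = (2 * m) * ((#A : ℝ) ^ ((m + 1) ^ 2) / 2) := by ring
    _ ≤ (ε * #A) * ((#A : ℝ) ^ ((m + 1) ^ 2) / 2) := by gcongr
    _ = (#A : ℝ) * (ε / 2 * (#A : ℝ) ^ ((m + 1) ^ 2)) := by ring

lemma abs_detCount_sub_le (ht : t ≠ 0) (hε : 0 ≤ ε) (hA : A.Nonempty) (hm : 2 * m ≤ ε * #A)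
    (henergy : 4 * (m + 1) * (Fintype.card F : ℝ) ^ (m + 1) * (Fintype.card F * detEnergy m A) ≤
      ε ^ 2 * (#A : ℝ) ^ (2 * m ^ 2 + 2 * m + 1)) :
    |(detCount (Fin (m + 1)) A t : ℝ) - (#A : ℝ) ^ ((m + 1) ^ 2) / Fintype.card F| ≤
      ε * (#A : ℝ) ^ ((m + 1) ^ 2) / Fintype.card F := by
  have hq : (0 : ℝ) < Fintype.card F := Nat.cast_pos.mpr Fintype.card_pos
  set B : ℝ := (#A : ℝ) ^ ((m + 1) ^ 2)
  have hdev : |(Fintype.card F : ℝ) * detCount (Fin (m + 1)) A t - B| ≤ ε * B := by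
    calc _ ≤ ε / 2 * B + ε / 2 * B := (abs_sub_le _ _ _).trans
          (add_le_add (abs_card_mul_detCount_sub_le ht hε henergy)
            (abs_pow_mul_card_fullRank_sub_le hA hm))
      _ = ε * B := by ring
  rwa [sub_div' hq.ne', abs_div, abs_of_pos hq, div_le_div_iff_of_pos_right hq, mul_comm]

end Asymptotics

section Threshold

/-- The lower bound for `|A|` in the theorem, up to the constant. -/
noncomputable def threshold (d : ℕ) (q : ℝ) : ℝ :=
  q ^ ((d : ℝ) / (2 * (d : ℝ) - 1)) +
    q ^ (((d : ℝ) ^ 2 - (d : ℝ) + 4) / (2 * ((d : ℝ) ^ 2 - (d : ℝ) + 2)))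

lemma mul_pow_le_of_mul_rpow_le {a q C β : ℝ} (hC : 1 ≤ C) (hq : 1 ≤ q) (h : C * q ^ β ≤ a)
    {k l : ℕ} (hk : k ≠ 0) (hkl : (l : ℝ) ≤ β * k) : C * q ^ l ≤ a ^ k := by
  have hq0 : 0 ≤ q := zero_le_one.trans hq
  calc C * q ^ l ≤ C ^ k * q ^ (β * k) := by
        refine mul_le_mul (le_self_pow₀ hC hk) ?_ (by positivity) (by positivity)
        rw [← Real.rpow_natCast]
        exact Real.rpow_le_rpow_of_exponent_le hq hkl
    _ = (C * q ^ β) ^ k := by rw [mul_pow, Real.rpow_mul hq0, Real.rpow_natCast]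
    _ ≤ a ^ k := pow_le_pow_left₀ (by positivity) h k

variable {a q C : ℝ} {d k l : ℕ} (hC : 1 ≤ C) (hq : 1 ≤ q) (h : C * threshold d q ≤ a)

include hC hq h

lemma mul_pow_le_of_fst_exponent (hk : k ≠ 0)
    (hkl : (l : ℝ) ≤ (d : ℝ) / (2 * d - 1) * k) : C * q ^ l ≤ a ^ k := by
  refine mul_pow_le_of_mul_rpow_le hC hq (le_trans ?_ h) hk hkl
  exact mul_le_mul_of_nonneg_left (le_add_of_nonneg_right (by positivity)) (by positivity)

lemma mul_pow_le_of_snd_exponent (hk : k ≠ 0)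
    (hkl : (l : ℝ) ≤ ((d : ℝ) ^ 2 - d + 4) / (2 * ((d : ℝ) ^ 2 - d + 2)) * k) :
    C * q ^ l ≤ a ^ k := by
  refine mul_pow_le_of_mul_rpow_le hC hq (le_trans ?_ h) hk hkl
  exact mul_le_mul_of_nonneg_left (le_add_of_nonneg_left (by positivity)) (by positivity)

lemma le_of_mul_threshold_le (hd : d ≠ 0) : C ≤ a := by
  have hd1 : (1 : ℝ) ≤ d := by exact_mod_cast Nat.one_le_iff_ne_zero.mpr hd
  simpa using mul_pow_le_of_fst_exponent hC hq h one_ne_zero (l := 0)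
    (by simpa using div_nonneg (by linarith) (by linarith))

end Threshold

lemma mul_pow_le_of_mul_threshold_add_three_le {a q C : ℝ} (hC : 1 ≤ C) (hq : 1 ≤ q) (p : ℕ)
    (h : C * threshold (p + 3) q ≤ a) :
    C * q ≤ a ^ (p + 2) ∧ C * q ^ (p + 3) ≤ a ^ (2 * p + 5) ∧
      C * q ^ (3 * p + 5) ≤ a ^ (6 * p + 8) := by
  have hp : (0 : ℝ) ≤ p := p.cast_nonneg
  have hden : (0 : ℝ) < 2 * ((p + 3 : ℕ) : ℝ) - 1 := by push_cast; linarith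
  have hfst {k l : ℕ} (hk : k ≠ 0) (hkl : (l : ℝ) * (2 * p + 5) ≤ (p + 3) * k) :
      C * q ^ l ≤ a ^ k := by
    refine mul_pow_le_of_fst_exponent hC hq h hk ?_
    rw [div_mul_eq_mul_div, le_div_iff₀ hden]
    push_cast
    linarith
  refine ⟨?_, hfst (by omega) (le_of_eq (by push_cast; ring)), ?_⟩
  · simpa using hfst (k := p + 2) (l := 1) (by omega) (by push_cast; nlinarith)
  · rcases Nat.eq_zero_or_pos p with rfl | hp
    · -- Only for `3 × 3` matrices is the second exponent, here `5 / 8`, needed.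
      exact mul_pow_le_of_snd_exponent hC hq h (by norm_num) (by norm_num)
    · have hp1 : (1 : ℝ) ≤ p := by exact_mod_cast hp
      exact hfst (by omega) (by push_cast; nlinarith)

section LargeSets

variable {F : Type*} [Field F] [Fintype F] [DecidableEq F] {A : Finset F} {t : F} {ε C : ℝ}

lemma abs_detCount_two_sub_le (ht : t ≠ 0) (hε : 0 ≤ ε) (hC : 1 ≤ C) (hεC : 8 ≤ ε ^ 2 * C)
    (hεA : 2 ≤ ε * #A) (hA : C * threshold 2 (Fintype.card F) ≤ #A) :
    |(detCount (Fin 2) A t : ℝ) - (#A : ℝ) ^ (2 ^ 2) / Fintype.card F| ≤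
      ε * (#A : ℝ) ^ (2 ^ 2) / Fintype.card F := by
  have hq : (1 : ℝ) ≤ Fintype.card F := by exact_mod_cast Fintype.card_pos
  have hA0 : A.Nonempty := Finset.card_pos.mp (by
    exact_mod_cast zero_lt_one.trans_le (hC.trans (le_of_mul_threshold_le hC hq hA two_ne_zero)))
  have hpow : C * (Fintype.card F : ℝ) ^ 3 ≤ (#A : ℝ) ^ 4 :=
    mul_pow_le_of_snd_exponent hC hq hA (by norm_num) (by norm_num)
  have henergy : (detEnergy 1 A : ℝ) ≤ #A := by exact_mod_cast detEnergy_one_le A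
  refine abs_detCount_sub_le ht hε hA0 (by simpa using hεA) ?_
  set q : ℝ := (Fintype.card F : ℝ)
  set a : ℝ := (#A : ℝ)
  calc _ = 8 * q ^ 3 * detEnergy 1 A := by push_cast; ring
    _ ≤ ε ^ 2 * C * q ^ 3 * a := by gcongr
    _ = ε ^ 2 * (C * q ^ 3) * a := by ring
    _ ≤ ε ^ 2 * a ^ 4 * a := by gcongr
    _ = _ := by ring

lemma abs_detCount_add_three_sub_le (p : ℕ) (ht : t ≠ 0) (hε : 0 ≤ ε) (hC : 1 ≤ C)
    (hεC : 8 * (p + 3) * 4 ^ (2 * p + 3) ≤ ε ^ 2 * C) (hεA : 2 * (p + 2) ≤ ε * #A)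
    (hA : C * threshold (p + 3) (Fintype.card F) ≤ #A) :
    |(detCount (Fin (p + 3)) A t : ℝ) - (#A : ℝ) ^ ((p + 3) ^ 2) / Fintype.card F| ≤
      ε * (#A : ℝ) ^ ((p + 3) ^ 2) / Fintype.card F := by
  have hq : (1 : ℝ) ≤ Fintype.card F := by exact_mod_cast Fintype.card_pos
  have hA0 : A.Nonempty := Finset.card_pos.mp (by
    exact_mod_cast zero_lt_one.trans_le (hC.trans (le_of_mul_threshold_le hC hq hA (by omega))))
  obtain ⟨hlin, hfst, hsnd⟩ := mul_pow_le_of_mul_threshold_add_three_le hC hq p hA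
  have henergy := card_mul_detEnergy_le p (A := A) (by nlinarith)
  refine abs_detCount_sub_le (m := p + 2) ht hε hA0 (by simpa using hεA) ?_
  set q : ℝ := (Fintype.card F : ℝ)
  set a : ℝ := (#A : ℝ)
  calc _ ≤ 4 * ((p + 2 : ℕ) + 1) * q ^ (p + 2 + 1) * (4 ^ (2 * p + 3) *
          (a ^ (2 * (p + 2) ^ 2) + q ^ (2 * p + 2) * a ^ (2 * p ^ 2 + 4 * p + 5))) := by gcongr
    _ = 8 * (p + 3) * 4 ^ (2 * p + 3) / 2 * (q ^ (p + 3) * a ^ (2 * p ^ 2 + 8 * p + 8) +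
          q ^ (3 * p + 5) * a ^ (2 * p ^ 2 + 4 * p + 5)) := by push_cast; ring
    _ ≤ ε ^ 2 * C / 2 * (q ^ (p + 3) * a ^ (2 * p ^ 2 + 8 * p + 8) +
          q ^ (3 * p + 5) * a ^ (2 * p ^ 2 + 4 * p + 5)) := by gcongr
    _ = ε ^ 2 / 2 * ((C * q ^ (p + 3)) * a ^ (2 * p ^ 2 + 8 * p + 8) +
          (C * q ^ (3 * p + 5)) * a ^ (2 * p ^ 2 + 4 * p + 5)) := by ring
    _ ≤ ε ^ 2 / 2 * (a ^ (2 * p + 5) * a ^ (2 * p ^ 2 + 8 * p + 8) +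
          a ^ (6 * p + 8) * a ^ (2 * p ^ 2 + 4 * p + 5)) := by gcongr
    _ = _ := by ring

lemma matCount_eq_detCount {F : Type} [CommRing F] [Fintype F] [DecidableEq F] (d : ℕ)
    (A : Finset F) (t : F) : matCount F d A t = detCount (Fin d) A t :=
  Nat.subtype_card _ fun M => by rw [Finset.mem_filter, mem_matrices]

end LargeSets

end RestrictedDet

open RestrictedDet in
theorem stmt_0_general (d : ℕ) (hd : 2 ≤ d) (ε : ℝ) (hε : 0 < ε) :
    ∃ C : ℝ, 0 < C ∧
      ∀ (F : Type) [Field F] [Fintype F],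
        ∀ A : Finset F,
          C * ((Fintype.card F : ℝ) ^ ((d : ℝ) / (2 * (d : ℝ) - 1)) +
              (Fintype.card F : ℝ) ^
                (((d : ℝ) ^ 2 - (d : ℝ) + 4) / (2 * ((d : ℝ) ^ 2 - (d : ℝ) + 2)))) ≤
            (A.card : ℝ) →
          ∀ t : F, t ≠ 0 →
            |(matCount F d A t : ℝ) - (A.card : ℝ) ^ (d ^ 2) / (Fintype.card F : ℝ)| ≤
              ε * (A.card : ℝ) ^ (d ^ 2) / (Fintype.card F : ℝ) := by
  obtain ⟨C, hC, hεC, hεC'⟩ :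
      ∃ C : ℝ, 1 ≤ C ∧ 2 * d ≤ ε * C ∧ 8 * d * 4 ^ (2 * d) ≤ ε ^ 2 * C := by
    refine ⟨max 1 (max (2 * d / ε) (8 * d * 4 ^ (2 * d) / ε ^ 2)), le_max_left _ _, ?_, ?_⟩
    · rw [← div_le_iff₀' hε]
      exact (le_max_left _ _).trans (le_max_right _ _)
    · rw [← div_le_iff₀' (by positivity)]
      exact (le_max_right _ _).trans (le_max_right _ _)
  refine ⟨C, zero_lt_one.trans_le hC, fun F _ _ A hA t ht => ?_⟩
  classical
  have hq : (1 : ℝ) ≤ Fintype.card F := by exact_mod_cast Fintype.card_pos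
  have hεA : 2 * d ≤ ε * (A.card : ℝ) := hεC.trans
    (mul_le_mul_of_nonneg_left (le_of_mul_threshold_le hC hq hA (by omega)) hε.le)
  rw [matCount_eq_detCount]
  obtain rfl | ⟨p, rfl⟩ : d = 2 ∨ ∃ p, d = p + 3 :=
    hd.eq_or_lt.imp Eq.symm fun h => (Nat.exists_eq_add_of_le' h)
  · exact abs_detCount_two_sub_le ht hε.le hC (by norm_num at hεC'; linarith)
      (by norm_num at hεA; linarith) hA
  · push_cast at hεA hεC'
    refine abs_detCount_add_three_sub_le p ht hε.le hC (hεC'.trans' ?_) (by linarith) hA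
    gcongr <;> [norm_num; omega]
theorem stmt_0 (d : ℕ) (hd : 2 ≤ d) (ε : ℝ) (hε : 0 < ε) :
    ∃ C : ℝ, 0 < C ∧
      ∀ (F : Type) [Field F] [Fintype F], Odd (Fintype.card F) →
        ∀ A : Finset F,
          C * ((Fintype.card F : ℝ) ^ ((d : ℝ) / (2 * (d : ℝ) - 1)) +
              (Fintype.card F : ℝ) ^
                (((d : ℝ) ^ 2 - (d : ℝ) + 4) / (2 * ((d : ℝ) ^ 2 - (d : ℝ) + 2)))) ≤
            (A.card : ℝ) →
          ∀ t : F, t ≠ 0 →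
            |(matCount F d A t : ℝ) - (A.card : ℝ) ^ (d ^ 2) / (Fintype.card F : ℝ)| ≤
              ε * (A.card : ℝ) ^ (d ^ 2) / (Fintype.card F : ℝ) := by
  obtain ⟨C, hC, h⟩ := stmt_0_general d hd ε hε
  exact ⟨C, hC, fun F _ _ _ => h F⟩
end

section
/- For every integer d ≥ 2, every subset A ⊆ F_q, and every index i with 1 ≤ i ≤ d, one has Σ_{y_i ∈ F_q, y_i ≠ 0} Σ_{y_{i+1}, …, y_d ∈ F_q} g(0, …, 0, y_i, y_{i+1}, …, y_d)² ≤ |A|^{d−i} · Σ_{l ∈ F_q, l ≠ 0} N_{d−1}(A;l)². -/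
/-- For a `(d-1) × d` matrix `M` (here `d = e + 1`), `vmat M` is the vector whose `i`-th
coordinate is `(-1)^(i+1)` times the determinant of the minor of `M` obtained by deleting
the `i`-th column (indices `0`-based, corresponding to `(-1)^i det M_i` with `1`-based `i`). -/
def vmat {F : Type} [CommRing F] {e : ℕ} (M : Matrix (Fin e) (Fin (e + 1)) F) :
    Fin (e + 1) → F :=
  fun i => (-1 : F) ^ ((i : ℕ) + 1) * (M.submatrix id i.succAbove).det

/-- `gcount F e A x` is the number of `(d-1) × d` matrices `M` (with `d = e + 1`) over `F`
with all entries in `A` such that `vmat M = x`. -/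
noncomputable def gcount (F : Type) [CommRing F] [Fintype F] (e : ℕ) (A : Finset F)
    (x : Fin (e + 1) → F) : ℕ :=
  Nat.card {M : Matrix (Fin e) (Fin (e + 1)) F // (∀ i j, M i j ∈ A) ∧ vmat M = x}

open Finset Matrix Module

section Coordinates

variable {ι K : Type*} [Fintype ι] [Field K]

/-- The coordinate functionals separate the points of `V`; a maximal linearly independent
subfamily of them still does. -/
lemma exists_card_eq_injOn_restrict (V : Submodule K (ι → K)) {k : ℕ}
    (hV : finrank K V ≤ k) (hk : k ≤ Fintype.card ι) :
    ∃ t : Finset ι, #t = k ∧ Set.InjOn t.restrict (V : Set (ι → K)) := by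
  classical
  let coord (r : ι) : Dual K V := LinearMap.proj r ∘ₗ V.subtype
  obtain ⟨κ, a, ha, hspan, hli⟩ := exists_linearIndependent' K coord
  have : Fintype κ := Fintype.ofInjective a ha
  have hcard : #(univ.image a) ≤ k := calc
    #(univ.image a) ≤ Fintype.card κ := card_image_le
    _ ≤ finrank K (Dual K V) := hli.fintype_card_le_finrank
    _ ≤ k := by rwa [Subspace.dual_finrank_eq]
  obtain ⟨t, hat, ht⟩ := exists_superset_card_eq hcard hk
  refine ⟨t, ht, fun v hv w hw hvw ↦ funext fun r ↦ ?_⟩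
  have heqOn : Set.EqOn (Dual.eval K V ⟨v, hv⟩) (Dual.eval K V ⟨w, hw⟩)
      (Set.range (coord ∘ a)) := by
    rintro _ ⟨p, rfl⟩
    exact congrFun hvw ⟨a p, hat (mem_image_of_mem a (mem_univ p))⟩
  have hr : coord r ∈ Submodule.span K (Set.range (coord ∘ a)) :=
    hspan ▸ Submodule.subset_span (Set.mem_range_self r)
  exact LinearMap.eqOn_span heqOn hr

lemma card_le_pow_of_finrank_le (V : Submodule K (ι → K)) {k : ℕ} (hV : finrank K V ≤ k)
    (hk : k ≤ Fintype.card ι) (A : Finset K) (S : Finset (ι → K))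
    (hSV : ∀ v ∈ S, v ∈ V) (hSA : ∀ v ∈ S, ∀ r, v r ∈ A) : #S ≤ #A ^ k := by
  classical
  obtain ⟨t, rfl, ht⟩ := exists_card_eq_injOn_restrict V hV hk
  calc #S ≤ #(Fintype.piFinset fun _ : t ↦ A) :=
        card_le_card_of_injOn t.restrict
          (fun v hv ↦ Fintype.mem_piFinset.mpr fun r ↦ hSA v hv r) (ht.mono hSV)
    _ = #A ^ #t := by simp

end Coordinates

section DeletedColumn

variable {m R : Type*} {n : ℕ}

lemma mulVec_apply_succAbove [NonUnitalNonAssocSemiring R]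
    (M : Matrix m (Fin (n + 1)) R) (x : Fin (n + 1) → R) (i : Fin (n + 1)) (r : m) :
    (M *ᵥ x) r = M r i * x i + (M.submatrix id i.succAbove *ᵥ (x ∘ i.succAbove)) r :=
  Fin.sum_univ_succAbove _ i

lemma eq_of_submatrix_succAbove_eq {M N : Matrix m (Fin (n + 1)) R} {i : Fin (n + 1)}
    (hsub : M.submatrix id i.succAbove = N.submatrix id i.succAbove)
    (hcol : M.col i = N.col i) : M = N := by
  ext r j
  rcases Fin.eq_self_or_eq_succAbove i j with rfl | ⟨k, rfl⟩
  · exact congrFun hcol r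
  · exact congrFun₂ hsub r k

lemma eq_of_submatrix_succAbove_eq_of_mulVec_eq [Ring R] [NoZeroDivisors R]
    {M N : Matrix m (Fin (n + 1)) R} {i : Fin (n + 1)} {x : Fin (n + 1) → R} (hxi : x i ≠ 0)
    (hsub : M.submatrix id i.succAbove = N.submatrix id i.succAbove)
    (hx : M *ᵥ x = N *ᵥ x) : M = N := by
  refine eq_of_submatrix_succAbove_eq hsub (funext fun r ↦ ?_)
  have hr := congrFun hx r
  rw [mulVec_apply_succAbove M x i, mulVec_apply_succAbove N x i, hsub] at hr
  exact mul_right_cancel₀ hxi (add_right_cancel hr)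

lemma col_mem_span_of_mulVec_eq_zero {K : Type*} [Field K] {M : Matrix m (Fin (n + 1)) K}
    {x : Fin (n + 1) → K} (hx : M *ᵥ x = 0) {i : Fin (n + 1)} (hxi : x i ≠ 0)
    {s : Set (Fin n)} (hs : ∀ j ∉ s, x (i.succAbove j) = 0) :
    M.col i ∈ Submodule.span K ((M.submatrix id i.succAbove).col '' s) := by
  set B := M.submatrix id i.succAbove
  have hrel : x i • M.col i = -∑ j, x (i.succAbove j) • B.col j := by
    ext r
    have hr := congrFun hx r
    rw [mulVec_apply_succAbove M x i] at hr
    simpa [B, mul_comm, mulVec, dotProduct] using eq_neg_of_add_eq_zero_left hr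
  refine (Submodule.smul_mem_iff _ hxi).mp (hrel ▸ ?_)
  refine Submodule.neg_mem _ (Submodule.sum_mem _ fun j _ ↦ ?_)
  by_cases hj : j ∈ s
  · exact Submodule.smul_mem _ _ (Submodule.subset_span ⟨j, hj, rfl⟩)
  · simp [hs j hj]

lemma card_filter_lt_succAbove (i : Fin (n + 1)) :
    #{j : Fin n | i < i.succAbove j} = n - i := by
  have hmap : ({j : Fin n | i < i.succAbove j} : Finset (Fin n)).map i.succAboveEmb = Ioi i := by
    ext j
    rcases Fin.eq_self_or_eq_succAbove i j with rfl | ⟨k, rfl⟩ <;> simp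
  rw [← card_map, hmap, Fin.card_Ioi, Nat.add_sub_cancel]

end DeletedColumn

section Minors

variable {R : Type} [CommRing R] {e : ℕ}

lemma mulVec_vmat (M : Matrix (Fin e) (Fin (e + 1)) R) : M *ᵥ vmat M = 0 := by
  ext r
  -- Repeat row `r` of `M` on top of `M` and expand the vanishing determinant along the top row.
  let N : Matrix (Fin (e + 1)) (Fin (e + 1)) R := of (vecCons (M r) M)
  have hN : N.det = 0 := det_zero_of_row_eq (Fin.succ_ne_zero r).symm rfl
  calc (M *ᵥ vmat M) r
    _ = ∑ j, M r j * vmat M j := rfl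
    _ = -∑ j : Fin (e + 1), (-1) ^ (j : ℕ) * N 0 j * (N.submatrix Fin.succ j.succAbove).det := by
        rw [← sum_neg_distrib]
        refine sum_congr rfl fun j _ ↦ ?_
        change M r j * ((-1) ^ ((j : ℕ) + 1) * (M.submatrix id j.succAbove).det) =
          -((-1) ^ (j : ℕ) * M r j * (M.submatrix id j.succAbove).det)
        ring
    _ = 0 := by rw [← det_succ_row_zero, hN, neg_zero]

lemma det_submatrix_succAbove (M : Matrix (Fin e) (Fin (e + 1)) R) (i : Fin (e + 1)) :
    (M.submatrix id i.succAbove).det = (-1) ^ ((i : ℕ) + 1) * vmat M i := by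
  rw [vmat, ← mul_assoc, ← mul_pow]
  simp

end Minors

section Counting

variable {F : Type} [Field F] {e : ℕ}

open Classical in
lemma matCount_eq_card [Fintype F] (A : Finset F) (t : F) :
    matCount F e A t =
      #{M : Matrix (Fin e) (Fin e) F | (∀ r j, M r j ∈ A) ∧ M.det = t} := by
  rw [matCount, Nat.card_eq_fintype_card, Fintype.card_subtype]

open Classical in
lemma gcount_eq_card [Fintype F] (A : Finset F) (x : Fin (e + 1) → F) :
    gcount F e A x =
      #{M : Matrix (Fin e) (Fin (e + 1)) F | (∀ r j, M r j ∈ A) ∧ vmat M = x} := by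
  rw [gcount, Nat.card_eq_fintype_card, Fintype.card_subtype]

lemma gcount_le_matCount [Fintype F] (A : Finset F) {x : Fin (e + 1) → F} {i : Fin (e + 1)}
    (hxi : x i ≠ 0) : gcount F e A x ≤ matCount F e A ((-1) ^ ((i : ℕ) + 1) * x i) := by
  rw [gcount_eq_card, matCount_eq_card]
  refine card_le_card_of_injOn (·.submatrix id i.succAbove) ?_ ?_
  · intro M hM
    obtain ⟨hMA, rfl⟩ : (∀ r j, M r j ∈ A) ∧ vmat M = x := by simpa using hM
    simpa [det_submatrix_succAbove] using fun r j ↦ hMA r (i.succAbove j)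
  · intro M hM N hN hsub
    obtain ⟨-, rfl⟩ : (∀ r j, M r j ∈ A) ∧ vmat M = x := by simpa using hM
    obtain ⟨-, hNM⟩ : (∀ r j, N r j ∈ A) ∧ vmat N = vmat M := by simpa using hN
    refine eq_of_submatrix_succAbove_eq_of_mulVec_eq hxi hsub ?_
    rw [mulVec_vmat, ← hNM, mulVec_vmat]

lemma card_le_pow_of_submatrix_succAbove_eq (A : Finset F) (i : Fin (e + 1))
    (B : Matrix (Fin e) (Fin e) F) (S : Finset (Matrix (Fin e) (Fin (e + 1)) F))
    (hA : ∀ M ∈ S, ∀ r, M r i ∈ A) (hB : ∀ M ∈ S, M.submatrix id i.succAbove = B)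
    (hlt : ∀ M ∈ S, ∀ j < i, vmat M j = 0) (hi : ∀ M ∈ S, vmat M i ≠ 0) :
    #S ≤ #A ^ (e - (i : ℕ)) := by
  classical
  let s : Finset (Fin e) := {j | i < i.succAbove j}
  let V := Submodule.span F (B.col '' s)
  have hV : finrank F V ≤ e - (i : ℕ) := calc
    finrank F V ≤ #(s.image B.col) := by
      rw [← Set.finrank, ← coe_image]
      exact finrank_span_finset_le_card (s.image B.col)
    _ ≤ #s := card_image_le
    _ = e - (i : ℕ) := card_filter_lt_succAbove i
  have hcol : ∀ M ∈ S, M.col i ∈ V := by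
    intro M hM
    have hs : ∀ j ∉ (s : Set (Fin e)), vmat M (i.succAbove j) = 0 := fun j hj ↦
      hlt M hM _ ((Fin.succAbove_ne i j).lt_of_le (by simpa [s] using hj))
    simpa only [hB M hM] using col_mem_span_of_mulVec_eq_zero (mulVec_vmat M) (hi M hM) hs
  have hinj : Set.InjOn (·.col i) (S : Set (Matrix (Fin e) (Fin (e + 1)) F)) :=
    fun M hM N hN ↦ eq_of_submatrix_succAbove_eq ((hB M hM).trans (hB N hN).symm)
  rw [← card_image_of_injOn hinj]
  refine card_le_pow_of_finrank_le V hV (by simp) A _ ?_ ?_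
  · exact forall_mem_image.mpr hcol
  · exact forall_mem_image.mpr hA

lemma sum_gcount_le [Fintype F] (A : Finset F) {i : Fin (e + 1)} {l : F} (hl : l ≠ 0)
    (X : Finset (Fin (e + 1) → F)) (hlt : ∀ x ∈ X, ∀ j < i, x j = 0)
    (hi : ∀ x ∈ X, (-1) ^ ((i : ℕ) + 1) * x i = l) :
    ∑ x ∈ X, gcount F e A x ≤ #A ^ (e - (i : ℕ)) * matCount F e A l := by
  classical
  let S : Finset (Matrix (Fin e) (Fin (e + 1)) F) := {M | (∀ r j, M r j ∈ A) ∧ vmat M ∈ X}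
  have hS {M} (hM : M ∈ S) : (∀ r j, M r j ∈ A) ∧ vmat M ∈ X := by simpa [S] using hM
  have hsum : ∑ x ∈ X, gcount F e A x = #S := by
    rw [card_eq_sum_card_fiberwise (f := vmat) (t := X) fun M hM ↦ (hS hM).2]
    refine sum_congr rfl fun x hx ↦ ?_
    rw [gcount_eq_card, filter_filter]
    congr 1 with M
    aesop
  rw [hsum, matCount_eq_card]
  refine card_le_mul_card_image_of_maps_to (f := (·.submatrix id i.succAbove)) ?_ _ ?_
  · intro M hM
    obtain ⟨hMA, hMX⟩ := hS hM
    simpa [det_submatrix_succAbove, hi _ hMX] using fun r j ↦ hMA r (i.succAbove j)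
  · intro B _
    refine card_le_pow_of_submatrix_succAbove_eq A i B _ ?_ ?_ ?_ ?_ <;>
      intro M hM <;> obtain ⟨hMS, hMB⟩ := mem_filter.mp hM
    · exact fun r ↦ (hS hMS).1 r i
    · exact hMB
    · exact hlt _ (hS hMS).2
    · exact right_ne_zero_of_mul (hi _ (hS hMS).2 ▸ hl)

end Counting

theorem stmt_3_general (F : Type) [Field F] [Fintype F] [DecidableEq F] (e : ℕ) (A : Finset F)
    (i : Fin (e + 1)) :
    ∑ x ∈ univ.filter (fun x : Fin (e + 1) → F => (∀ j, j < i → x j = 0) ∧ x i ≠ 0),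
        gcount F e A x ^ 2 ≤
      #A ^ (e - (i : ℕ)) * ∑ l ∈ univ.filter (fun l : F => l ≠ 0), matCount F e A l ^ 2 := by
  set X := univ.filter fun x : Fin (e + 1) → F => (∀ j, j < i → x j = 0) ∧ x i ≠ 0
  have hX {x} (hx : x ∈ X) : (∀ j < i, x j = 0) ∧ x i ≠ 0 := by simpa [X] using hx
  let minorDet (x : Fin (e + 1) → F) : F := (-1) ^ ((i : ℕ) + 1) * x i
  have hminorDet : ∀ x ∈ X, minorDet x ∈ univ.filter (fun l : F => l ≠ 0) := fun x hx ↦ by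
    simpa [minorDet] using (hX hx).2
  calc ∑ x ∈ X, gcount F e A x ^ 2
      ≤ ∑ x ∈ X, matCount F e A (minorDet x) * gcount F e A x := by
        gcongr with x hx
        rw [sq]
        gcongr
        exact gcount_le_matCount A (hX hx).2
    _ = ∑ l with l ≠ 0, matCount F e A l * ∑ x ∈ X with minorDet x = l, gcount F e A x := by
        rw [← sum_fiberwise_of_maps_to hminorDet]
        refine sum_congr rfl fun l _ ↦ ?_
        rw [mul_sum]
        exact sum_congr rfl fun x hx ↦ by rw [(mem_filter.mp hx).2]
    _ ≤ ∑ l with l ≠ 0, matCount F e A l * (#A ^ (e - (i : ℕ)) * matCount F e A l) := by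
        gcongr with l hl
        exact sum_gcount_le A (mem_filter.mp hl).2 _
          (fun x hx ↦ (hX (mem_filter.mp hx).1).1) fun x hx ↦ (mem_filter.mp hx).2
    _ = #A ^ (e - (i : ℕ)) * ∑ l with l ≠ 0, matCount F e A l ^ 2 := by
        rw [mul_sum]
        exact sum_congr rfl fun l _ ↦ by ring

/-- Statement 3, with `d = e + 1 ≥ 2` and the index `i : Fin (e + 1)` corresponding to the
`1`-based index `i + 1 ∈ {1, …, d}`; the vectors `(0, …, 0, y_i, …, y_d)` are exactly the
`x : F_q^d` vanishing at coordinates before `i` and nonzero at `i`. -/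
theorem stmt_3 (F : Type) [Field F] [Fintype F] [DecidableEq F]
    (hq : Odd (Fintype.card F)) (e : ℕ) (he : 1 ≤ e) (A : Finset F) (i : Fin (e + 1)) :
    ∑ x ∈ Finset.univ.filter
        (fun x : Fin (e + 1) → F => (∀ j, j < i → x j = 0) ∧ x i ≠ 0),
        gcount F e A x ^ 2 ≤
      A.card ^ (e - (i : ℕ)) *
        ∑ l ∈ Finset.univ.filter (fun l : F => l ≠ 0), matCount F e A l ^ 2 :=
  stmt_3_general F e A i
end

section
/- Fix an integer d ≥ 2. There exists a constant C > 0 (depending only on d) such that for every power q of an odd prime and every subset A ⊆ F_q, one has Σ_{l ∈ F_q, l ≠ 0} N_d(A;l)² ≤ C·(|A|^{2d²}/q + q^{d(d−1)/2}·|A|^{d(d+1)−1}). -/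
/-!
Write `n = |A|`, `q = |F|`, and let `S_d` be the sum over `l ≠ 0` of `N_d(A;l)²`, that is, the
number of pairs of matrices over `A` with equal nonzero determinant. Everything rests on the
recursion `S_{k+1} ≤ n^(2(k+1)²)/q + (k+1) q^k n^(2k+2) S_k`.

Expand the determinant along the first column, `det M = x · c(P)`, where `x` is that column and
`c(P)` is the vector of signed maximal minors of the remaining columns `P`. Cauchy–Schwarz over `x`
reduces `S_{k+1}` to the sum over nonzero `x ∈ A^(k+1)` of the number of pairs `(P, P')` with
`x · c(P) = x · c(P')`. The excess of this number over its expected value (all pairs, divided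
by `q`) is nonnegative and depends only on the line through `x`. A line contains at most `n` nonzero
points of `A^(k+1)`, so the sum is controlled by the sum over all of `F^(k+1)`, where the excess is
computed exactly in terms of the number of pairs with `c(P) = c(P')`. Finally, such pairs with
`c(P) ≠ 0` are counted by `S_k`: delete a row `i` at which `c(P)` does not vanish; since `c(P')`
is orthogonal to the columns of `P'`, the deleted row of `P'` is determined by `c(P)` and the other
rows of `P'`, and only the `n^k` choices for the deleted row of `P` are lost.

Iterating the recursion from `S_1 ≤ n`, the main term of step `k` contributes
`q^k n^(2k+2) n^(2k²)/q`, which is at most the next main term if `q ≤ n²`; if `n² ≤ q`, every main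
term is dominated by the error term of the same step, and the error terms reproduce themselves
exactly.
-/

namespace DetEnergy

open Finset Matrix

section Collisions

variable {α ι κ γ : Type*} [DecidableEq γ]

/-- The number of ordered pairs in `S` (diagonal ones included) on which `f` takes equal values:
the second moment of the fibre sizes of `f`. -/
def collisions (S : Finset ι) (f : ι → γ) : ℕ :=
  #{p ∈ S ×ˢ S | f p.1 = f p.2}

lemma sum_sq_card_fiber {S : Finset ι} {T : Finset γ} {f : ι → γ} (h : ∀ i ∈ S, f i ∈ T) :
    ∑ t ∈ T, #{i ∈ S | f i = t} ^ 2 = collisions S f := by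
  have hmaps : ∀ p ∈ ({p ∈ S ×ˢ S | f p.1 = f p.2} : Finset (ι × ι)), f p.1 ∈ T := fun p hp =>
    h _ (mem_product.mp (mem_filter.mp hp).1).1
  rw [collisions, card_eq_sum_card_fiberwise hmaps]
  refine sum_congr rfl fun t _ => ?_
  rw [sq, ← card_product]
  congr 1
  grind

lemma sq_card_le_card_mul_collisions {S : Finset ι} {T : Finset γ} {f : ι → γ}
    (h : ∀ i ∈ S, f i ∈ T) : #S ^ 2 ≤ #T * collisions S f := by
  rw [← sum_sq_card_fiber h, card_eq_sum_card_fiberwise h]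
  exact sq_sum_le_card_mul_sum_sq

lemma collisions_eq_card_of_injOn {S : Finset ι} {f : ι → γ} (hf : Set.InjOn f S) :
    collisions S f = #S := by
  classical
  refine (congrArg card (Finset.ext fun p => ?_)).trans (diag_card S)
  simp only [mem_filter, mem_product, mem_diag]
  exact ⟨fun h => ⟨h.1.1, hf h.1.1 h.1.2 h.2⟩, fun h => ⟨⟨h.1, h.2 ▸ h.1⟩, congrArg f h.2⟩⟩

lemma collisions_le_of_injOn {S : Finset ι} {T : Finset κ} {f : ι → γ} {g : κ → γ} (e : ι → κ)
    (hST : Set.MapsTo e S T) (he : Set.InjOn e S) (hfg : ∀ i ∈ S, g (e i) = f i) :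
    collisions S f ≤ collisions T g := by
  refine card_le_card_of_injOn (Prod.map e e) ?_ ?_
  · rintro ⟨i, j⟩ hp
    obtain ⟨⟨hi, hj⟩, hij⟩ := by simpa only [coe_filter, mem_product, Set.mem_ofPred_eq] using hp
    simpa [hfg i hi, hfg j hj, hij] using And.intro (hST hi) (hST hj)
  · exact (he.prodMap he).mono fun p hp => by simpa using (mem_filter.mp hp).1

lemma collisions_product_le (V : Finset α) (S : Finset ι) (f : α → ι → γ) :
    collisions (V ×ˢ S) (fun p => f p.1 p.2) ≤ #V * ∑ x ∈ V, collisions S (f x) := by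
  set T : Finset γ := (V ×ˢ S).image fun p => f p.1 p.2
  have hmaps : ∀ p ∈ V ×ˢ S, f p.1 p.2 ∈ T := fun p hp => mem_image_of_mem _ hp
  have hfiber (t : γ) : #{p ∈ V ×ˢ S | f p.1 p.2 = t} = ∑ x ∈ V, #{i ∈ S | f x i = t} := by
    simp only [card_filter, sum_product]
  calc collisions (V ×ˢ S) (fun p => f p.1 p.2)
      = ∑ t ∈ T, (∑ x ∈ V, #{i ∈ S | f x i = t}) ^ 2 := by
        simp only [← sum_sq_card_fiber hmaps, hfiber]
    _ ≤ ∑ t ∈ T, #V * ∑ x ∈ V, #{i ∈ S | f x i = t} ^ 2 :=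
        sum_le_sum fun t _ => sq_sum_le_card_mul_sum_sq
    _ = #V * ∑ x ∈ V, collisions S (f x) := by
        rw [← mul_sum, sum_comm]
        congr 1
        exact sum_congr rfl fun x hx =>
          sum_sq_card_fiber fun i hi => hmaps (x, i) (mk_mem_product hx hi)

lemma collisions_filter_ne_zero_le [Fintype κ] [Zero γ] (S : Finset ι) (c : ι → κ → γ) :
    collisions {i ∈ S | c i ≠ 0} c ≤ ∑ j, collisions {i ∈ S | c i j ≠ 0} c := by
  classical
  refine (card_le_card fun p hp => ?_).trans card_biUnion_le
  simp only [mem_filter, mem_product] at hp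
  obtain ⟨⟨⟨h₁, hne⟩, h₂, -⟩, heq⟩ := hp
  obtain ⟨j, hj⟩ := Function.ne_iff.mp hne
  simp only [mem_biUnion, mem_univ, true_and, mem_filter, mem_product]
  exact ⟨j, ⟨⟨h₁, hj⟩, h₂, heq ▸ hj⟩, heq⟩

end Collisions

lemma card_mul_sum_le_of_card_orbit_le {G E : Type*} [Group G] [Fintype G] [Fintype E]
    [DecidableEq E] [MulAction G E] {V : Finset E} {N : ℕ} {f : E → ℝ}
    (hfree : ∀ x ∈ V, Function.Injective fun g : G => g • x)
    (horbit : ∀ z, #{x ∈ V | ∃ g : G, g • x = z} ≤ N)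
    (hf₀ : ∀ z, 0 ≤ f z) (hf : ∀ (g : G) z, f (g • z) = f z) :
    (Fintype.card G : ℝ) * ∑ x ∈ V, f x ≤ N * ∑ z, f z := by
  have hfiber (z : E) : #{p ∈ (univ : Finset G) ×ˢ V | p.1 • p.2 = z} ≤ N := by
    refine (card_le_card_of_injOn Prod.snd ?_ ?_).trans (horbit z)
    · rintro ⟨g, x⟩ hp
      simp only [coe_filter, mem_product, mem_univ, true_and, Set.mem_ofPred_eq] at hp ⊢
      exact ⟨hp.1, g, hp.2⟩
    · rintro ⟨g, x⟩ hp ⟨g', x'⟩ hp' rfl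
      simp only [coe_filter, mem_product, mem_univ, true_and, Set.mem_ofPred_eq] at hp hp'
      rw [hfree x hp.1 (hp.2.trans hp'.2.symm)]
  calc (Fintype.card G : ℝ) * ∑ x ∈ V, f x
      = ∑ p ∈ (univ : Finset G) ×ˢ V, f (p.1 • p.2) := by
        simp [sum_product, hf]
    _ = ∑ z, (#{p ∈ (univ : Finset G) ×ˢ V | p.1 • p.2 = z} : ℝ) * f z := by
        simp only [← sum_fiberwise (univ ×ˢ V) (fun p : G × E => p.1 • p.2), ← nsmul_eq_mul]
        refine sum_congr rfl fun z _ => sum_eq_card_nsmul fun p hp => ?_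
        rw [(mem_filter.mp hp).2]
    _ ≤ N * ∑ z, f z := by
        rw [mul_sum]
        exact sum_le_sum fun z _ =>
          mul_le_mul_of_nonneg_right (Nat.cast_le.mpr (hfiber z)) (hf₀ z)

section NonzeroVectors

variable {R : Type*} [Zero R] [DecidableEq R]

/-- The nonzero vectors with all coordinates in `A`. -/
def nonzeroVectors (A : Finset R) (κ : Type*) [Fintype κ] [DecidableEq κ] : Finset (κ → R) :=
  {x ∈ Fintype.piFinset fun _ => A | x ≠ 0}

lemma card_nonzeroVectors_le (A : Finset R) (κ : Type*) [Fintype κ] [DecidableEq κ] :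
    #(nonzeroVectors A κ) ≤ #A ^ Fintype.card κ :=
  (card_filter_le _ _).trans (by simp)

end NonzeroVectors

section LinearForms

variable {F ι κ : Type*} [Field F] [Fintype F] [DecidableEq F] [Fintype κ]

lemma card_dotProduct_eq_zero [DecidableEq κ] {v : κ → F} (hv : v ≠ 0) :
    (#{x : κ → F | x ⬝ᵥ v = 0} : ℝ) =
      (Fintype.card F : ℝ) ^ Fintype.card κ / Fintype.card F := by
  let form : (κ → F) →+ F := ⟨⟨fun x => x ⬝ᵥ v, zero_dotProduct v⟩, fun x y => add_dotProduct x y v⟩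
  have hsurj : Function.Surjective form := fun t => by
    obtain ⟨i, hi⟩ := Function.ne_iff.mp hv
    exact ⟨Pi.single i (t / v i), by simp [form, div_mul_cancel₀ t hi]⟩
  have hker : #{x : κ → F | x ⬝ᵥ v = 0} = Nat.card form.ker := by
    rw [← Nat.card_eq_finsetCard]
    exact Nat.card_congr (Equiv.subtypeEquivRight fun x => by simp [form, AddMonoidHom.mem_ker])
  have hcard := form.ker.card_mul_index
  rw [← hker, AddSubgroup.index_ker, AddMonoidHom.range_eq_top.mpr hsurj, AddSubgroup.card_top,
    Nat.card_eq_fintype_card, Nat.card_eq_fintype_card, Fintype.card_fun] at hcard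
  rw [eq_div_iff (Nat.cast_ne_zero.mpr Fintype.card_ne_zero)]
  exact_mod_cast hcard

/-- The excess of the number of pairs in `S` whose vectors `c i` agree on the linear form `x` over
its expected value `|S|² / q`. -/
noncomputable def dotExcess (S : Finset ι) (c : ι → κ → F) (x : κ → F) : ℝ :=
  collisions S (fun i => x ⬝ᵥ c i) - (#S : ℝ) ^ 2 / Fintype.card F

lemma dotExcess_nonneg (S : Finset ι) (c : ι → κ → F) (x : κ → F) : 0 ≤ dotExcess S c x := by
  have hCS := sq_card_le_card_mul_collisions (S := S) (T := univ) (f := fun i => x ⬝ᵥ c i)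
    fun _ _ => mem_univ _
  rw [dotExcess, sub_nonneg, div_le_iff₀' (Nat.cast_pos.mpr Fintype.card_pos)]
  exact_mod_cast hCS

lemma dotExcess_units_smul (S : Finset ι) (c : ι → κ → F) (s : Fˣ) (x : κ → F) :
    dotExcess S c (s • x) = dotExcess S c x := by
  simp [dotExcess, collisions, smul_dotProduct]

variable [DecidableEq κ]

lemma sum_collisions_dotProduct (S : Finset ι) (c : ι → κ → F) :
    ∑ x : κ → F, (collisions S (fun i => x ⬝ᵥ c i) : ℝ) =
      (Fintype.card F : ℝ) ^ Fintype.card κ / Fintype.card F *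
        ((Fintype.card F - 1) * collisions S c + (#S : ℝ) ^ 2) := by
  set q : ℝ := (Fintype.card F : ℝ) with hq_def
  have hq : q ≠ 0 := Nat.cast_ne_zero.mpr Fintype.card_ne_zero
  have hpair (p : ι × ι) : (#{x : κ → F | x ⬝ᵥ c p.1 = x ⬝ᵥ c p.2} : ℝ) =
      q ^ Fintype.card κ / q * ((q - 1) * (if c p.1 = c p.2 then 1 else 0) + 1) := by
    split_ifs with h
    · simp only [h, filter_true, card_univ, Fintype.card_fun, Nat.cast_pow, ← hq_def]
      field_simp
      ring
    · simp only [← sub_eq_zero (a := _ ⬝ᵥ c p.1), ← dotProduct_sub,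
        card_dotProduct_eq_zero (sub_ne_zero.mpr h), mul_zero, zero_add, mul_one, ← hq_def]
  calc ∑ x : κ → F, (collisions S (fun i => x ⬝ᵥ c i) : ℝ)
      = ∑ p ∈ S ×ˢ S, (#{x : κ → F | x ⬝ᵥ c p.1 = x ⬝ᵥ c p.2} : ℝ) := by
        simp only [collisions, card_filter, Nat.cast_sum]
        exact sum_comm
    _ = q ^ Fintype.card κ / q * ((q - 1) * collisions S c + (#S : ℝ) ^ 2) := by
        simp only [hpair, sum_add_distrib, ← mul_sum, sum_boole, sum_const, card_product,
          nsmul_eq_mul, mul_one, ← sq, Nat.cast_pow, collisions]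

lemma sum_dotExcess (S : Finset ι) (c : ι → κ → F) :
    ∑ x, dotExcess S c x =
      (Fintype.card F : ℝ) ^ Fintype.card κ / Fintype.card F *
        ((Fintype.card F - 1) * collisions S c) := by
  simp only [dotExcess, sum_sub_distrib, sum_collisions_dotProduct, sum_const, card_univ,
    Fintype.card_fun, nsmul_eq_mul, Nat.cast_pow]
  ring

lemma card_nonzeroVectors_inter_line_le (A : Finset F) (z : κ → F) :
    #{x ∈ nonzeroVectors A κ | ∃ s : Fˣ, s • x = z} ≤ #A := by
  by_cases hz : z = 0
  · rw [filter_false_of_mem, card_empty]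
    · exact Nat.zero_le _
    · rintro x hx ⟨s, hs⟩
      exact (mem_filter.mp hx).2 ((smul_eq_zero_iff_eq s).mp (hs.trans hz))
  obtain ⟨i, hi⟩ := Function.ne_iff.mp hz
  refine card_le_card_of_injOn (fun x => x i) (fun x hx => ?_) ?_
  · exact Fintype.mem_piFinset.mp (mem_filter.mp (mem_filter.mp hx).1).1 i
  · intro x hx y hy (hxy : x i = y i)
    obtain ⟨s, rfl⟩ := (mem_filter.mp hx).2
    obtain ⟨t, ht⟩ := (mem_filter.mp hy).2
    have hst : (t : F) * y i = s * x i := congrFun ht i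
    have hxi : x i ≠ 0 := right_ne_zero_of_mul hi
    have : t = s := Units.ext (mul_right_cancel₀ hxi (by rwa [← hxy] at hst))
    exact (MulAction.injective s (this ▸ ht)).symm

lemma sum_collisions_dotProduct_le (A : Finset F) (S : Finset ι) (c : ι → κ → F) :
    ∑ x ∈ nonzeroVectors A κ, (collisions S (fun i => x ⬝ᵥ c i) : ℝ) ≤
      #(nonzeroVectors A κ) * ((#S : ℝ) ^ 2 / Fintype.card F) +
        #A * ((Fintype.card F : ℝ) ^ Fintype.card κ / Fintype.card F * collisions S c) := by
  have hq : (0 : ℝ) < Fintype.card F - 1 :=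
    sub_pos.mpr (Nat.one_lt_cast.mpr Fintype.one_lt_card)
  have hfree : ∀ x ∈ nonzeroVectors A κ, Function.Injective fun s : Fˣ => s • x := fun x hx s t h =>
    Units.ext (smul_left_injective F (mem_filter.mp hx).2 h)
  have hexcess := card_mul_sum_le_of_card_orbit_le hfree (card_nonzeroVectors_inter_line_le A)
    (dotExcess_nonneg S c) (dotExcess_units_smul S c)
  rw [sum_dotExcess, Fintype.card_units, Nat.cast_pred Fintype.card_pos] at hexcess
  have hcancel : ∑ x ∈ nonzeroVectors A κ, dotExcess S c x ≤
      #A * ((Fintype.card F : ℝ) ^ Fintype.card κ / Fintype.card F * collisions S c) :=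
    le_of_mul_le_mul_left (hexcess.trans_eq (by ring)) hq
  simp only [dotExcess, sum_sub_distrib, sum_const, nsmul_eq_mul] at hcancel
  linarith

end LinearForms

section MatricesOver

variable {R m n : Type*} [Fintype m] [Fintype n] [DecidableEq m] [DecidableEq n]

/-- The `m × n` matrices with all entries in `A`. -/
def matricesOver (A : Finset R) (m n : Type*) [Fintype m] [Fintype n] [DecidableEq m]
    [DecidableEq n] : Finset (Matrix m n R) :=
  Fintype.piFinset fun _ => Fintype.piFinset fun _ => A

lemma mem_matricesOver {A : Finset R} {M : Matrix m n R} :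
    M ∈ matricesOver A m n ↔ ∀ i j, M i j ∈ A :=
  Fintype.mem_piFinset.trans (forall_congr' fun _ => Fintype.mem_piFinset)

lemma card_matricesOver (A : Finset R) (m n : Type*) [Fintype m] [Fintype n] [DecidableEq m]
    [DecidableEq n] : #(matricesOver A m n) = #A ^ (Fintype.card n * Fintype.card m) :=
  (Fintype.card_piFinset _).trans (by simp [pow_mul])

end MatricesOver

section Determinants

variable {R : Type*} [CommRing R]

/-- The signed maximal minors of a `(k+1) × k` matrix: the `i`-th one deletes row `i`, with the sign
it has in the expansion of a determinant along a column put in front of `P`. -/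
def signedMinors {k : ℕ} (P : Matrix (Fin (k + 1)) (Fin k) R) (i : Fin (k + 1)) : R :=
  (-1) ^ (i : ℕ) * (P.submatrix i.succAbove id).det

lemma det_eq_col_zero_dotProduct_signedMinors {k : ℕ}
    (M : Matrix (Fin (k + 1)) (Fin (k + 1)) R) :
    M.det = (fun i => M i 0) ⬝ᵥ signedMinors (M.submatrix id Fin.succ) := by
  rw [det_succ_column_zero]
  refine sum_congr rfl fun i _ => ?_
  simp only [signedMinors, submatrix_submatrix, Function.comp_id, Function.id_comp]
  ring

lemma col_dotProduct_signedMinors {k : ℕ} (P : Matrix (Fin (k + 1)) (Fin k) R) (j : Fin k) :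
    (fun i => P i j) ⬝ᵥ signedMinors P = 0 := by
  let M : Matrix (Fin (k + 1)) (Fin (k + 1)) R := .of fun i => Fin.cons (P i j) (P i)
  have hM : M.det = 0 :=
    det_zero_of_column_eq (i := 0) (j := j.succ) (Fin.succ_ne_zero j).symm fun i => by simp [M]
  exact (det_eq_col_zero_dotProduct_signedMinors M).symm.trans hM

lemma eq_of_signedMinors_eq [IsDomain R] {k : ℕ} {P Q : Matrix (Fin (k + 1)) (Fin k) R}
    {i : Fin (k + 1)} (hi : signedMinors P i ≠ 0) (hminors : signedMinors P = signedMinors Q)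
    (hrows : P.submatrix i.succAbove id = Q.submatrix i.succAbove id) : P = Q := by
  have hrow (a j : Fin k) : P (i.succAbove a) j = Q (i.succAbove a) j :=
    congrFun (congrFun hrows a) j
  ext a j
  rcases Fin.eq_self_or_eq_succAbove i a with rfl | ⟨a, rfl⟩
  · have horth : (fun i => P i j) ⬝ᵥ signedMinors P = (fun i => Q i j) ⬝ᵥ signedMinors P := by
      rw [col_dotProduct_signedMinors, hminors, col_dotProduct_signedMinors]
    simp only [dotProduct, Fin.sum_univ_succAbove _ a, hrow] at horth
    exact mul_right_cancel₀ hi (add_right_cancel horth)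
  · exact hrow a j

variable [DecidableEq R]

/-- The number of pairs of `d × d` matrices over `A` with equal nonzero determinant. -/
def detEnergy (A : Finset R) (d : ℕ) : ℕ :=
  collisions {M ∈ matricesOver A (Fin d) (Fin d) | M.det ≠ 0} det

lemma detEnergy_one_le (A : Finset R) : detEnergy A 1 ≤ #A := by
  have hinj : Function.Injective (det : Matrix (Fin 1) (Fin 1) R → R) := fun M N h =>
    Matrix.ext fun i j => by simpa [Subsingleton.elim i 0, Subsingleton.elim j 0] using h
  rw [detEnergy, collisions_eq_card_of_injOn hinj.injOn]
  exact (card_filter_le _ _).trans (by simp [card_matricesOver])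

lemma collisions_signedMinors_le [IsDomain R] (A : Finset R) {k : ℕ} (i : Fin (k + 1)) :
    collisions {P ∈ matricesOver A (Fin (k + 1)) (Fin k) | signedMinors P i ≠ 0} signedMinors ≤
      #A ^ k * detEnergy A k := by
  let delRow (P : Matrix (Fin (k + 1)) (Fin k) R) := P.submatrix i.succAbove id
  rw [← Fintype.card_piFinset_const, detEnergy, collisions, collisions, ← card_product]
  refine card_le_card_of_injOn (fun p => (p.1 i, delRow p.1, delRow p.2)) ?_ ?_
  · rintro ⟨P, Q⟩ hp
    simp only [coe_filter, mem_product, mem_filter, mem_matricesOver, Set.mem_ofPred_eq] at hp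
    obtain ⟨⟨⟨hPA, hP⟩, hQA, hQ⟩, hPQ⟩ := hp
    have hdet : (delRow P).det = (delRow Q).det :=
      ((isUnit_one.neg.pow _).mul_right_inj).mp (congrFun hPQ i)
    simp only [coe_product, Set.mem_prod, mem_coe, Fintype.mem_piFinset, mem_filter, mem_product,
      mem_matricesOver]
    exact ⟨hPA i, ⟨⟨fun _ => hPA _, right_ne_zero_of_mul hP⟩,
      fun _ => hQA _, right_ne_zero_of_mul hQ⟩, hdet⟩
  · rintro ⟨P, Q⟩ hp ⟨P', Q'⟩ hp' h
    simp only [coe_filter, mem_product, mem_filter, Set.mem_ofPred_eq] at hp hp'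
    obtain ⟨hrow, hdelP, hdelQ⟩ : P i = P' i ∧ delRow P = delRow P' ∧ delRow Q = delRow Q' := by
      simpa only [Prod.mk.injEq] using h
    have hP : P = P' := funext fun a => by
      rcases Fin.eq_self_or_eq_succAbove i a with rfl | ⟨a, rfl⟩
      exacts [hrow, congrFun hdelP a]
    subst hP
    rw [eq_of_signedMinors_eq hp.1.2.2 (hp.2.symm.trans hp'.2) hdelQ]

lemma collisions_signedMinors_ne_zero_le [IsDomain R] (A : Finset R) (k : ℕ) :
    collisions {P ∈ matricesOver A (Fin (k + 1)) (Fin k) | signedMinors P ≠ 0} signedMinors ≤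
      (k + 1) * (#A ^ k * detEnergy A k) :=
  (collisions_filter_ne_zero_le _ _).trans
    ((sum_le_card_nsmul _ _ _ fun i _ => collisions_signedMinors_le A i).trans_eq (by simp))

lemma detEnergy_succ_le_card_mul_sum_collisions (A : Finset R) (k : ℕ) :
    detEnergy A (k + 1) ≤ #(nonzeroVectors A (Fin (k + 1))) *
      ∑ x ∈ nonzeroVectors A (Fin (k + 1)),
        collisions {P ∈ matricesOver A (Fin (k + 1)) (Fin k) | signedMinors P ≠ 0}
          (fun P => x ⬝ᵥ signedMinors P) := by
  refine le_trans ?_ (collisions_product_le _ _ fun x P => x ⬝ᵥ signedMinors P)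
  refine collisions_le_of_injOn (fun M => (fun i => M i 0, M.submatrix id Fin.succ)) ?_ ?_
    fun M _ => (det_eq_col_zero_dotProduct_signedMinors M).symm
  · intro M hM
    simp only [coe_filter, mem_matricesOver, Set.mem_ofPred_eq,
      det_eq_col_zero_dotProduct_signedMinors] at hM
    obtain ⟨hMA, hdet⟩ := hM
    simp only [coe_product, Set.mem_prod, mem_coe, nonzeroVectors, mem_filter,
      Fintype.mem_piFinset, mem_matricesOver]
    exact ⟨⟨fun i => hMA i 0, fun h => hdet (by rw [h, zero_dotProduct])⟩,
      fun i j => hMA i j.succ, fun h => hdet (by rw [h, dotProduct_zero])⟩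
  · intro M _ N _ h
    obtain ⟨hcol, hrest⟩ := Prod.mk.inj h
    ext a b
    refine Fin.cases ?_ (fun b => ?_) b
    exacts [congrFun hcol a, congrFun (congrFun hrest a) b]

end Determinants

lemma detEnergy_succ_le {F : Type*} [Field F] [Fintype F] [DecidableEq F] (A : Finset F) (k : ℕ) :
    (detEnergy A (k + 1) : ℝ) ≤ (#A : ℝ) ^ (2 * (k + 1) ^ 2) / Fintype.card F +
      (k + 1) * ((Fintype.card F : ℝ) ^ k * (#A : ℝ) ^ (2 * k + 2) * detEnergy A k) := by
  set V := nonzeroVectors A (Fin (k + 1))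
  set S := {P ∈ matricesOver A (Fin (k + 1)) (Fin k) | signedMinors P ≠ 0}
  have hq : (Fintype.card F : ℝ) ≠ 0 := Nat.cast_ne_zero.mpr Fintype.card_ne_zero
  have hV : (#V : ℝ) ≤ (#A : ℝ) ^ (k + 1) := by
    have := card_nonzeroVectors_le A (Fin (k + 1))
    rw [Fintype.card_fin] at this
    exact_mod_cast this
  have hS : (#S : ℝ) ≤ (#A : ℝ) ^ (k * (k + 1)) := by
    have : #S ≤ #(matricesOver A (Fin (k + 1)) (Fin k)) := card_filter_le _ _
    rw [card_matricesOver, Fintype.card_fin, Fintype.card_fin] at this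
    exact_mod_cast this
  have hminors : (collisions S signedMinors : ℝ) ≤ (k + 1) * ((#A : ℝ) ^ k * detEnergy A k) := by
    exact_mod_cast collisions_signedMinors_ne_zero_le A k
  have hsum := sum_collisions_dotProduct_le A S signedMinors
  rw [Fintype.card_fin, pow_succ (Fintype.card F : ℝ), mul_div_cancel_right₀ _ hq] at hsum
  set q : ℝ := (Fintype.card F : ℝ)
  set n : ℝ := (#A : ℝ)
  calc (detEnergy A (k + 1) : ℝ)
      ≤ #V * ∑ x ∈ V, (collisions S (fun P => x ⬝ᵥ signedMinors P) : ℝ) := by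
        exact_mod_cast detEnergy_succ_le_card_mul_sum_collisions A k
    _ ≤ #V * (#V * ((#S : ℝ) ^ 2 / q) + n * (q ^ k * collisions S signedMinors)) := by
        gcongr
    _ ≤ n ^ (k + 1) * (n ^ (k + 1) * ((n ^ (k * (k + 1))) ^ 2 / q) +
          n * (q ^ k * ((k + 1) * (n ^ k * detEnergy A k)))) := by
        gcongr
    _ = n ^ (2 * (k + 1) ^ 2) / q + (k + 1) * (q ^ k * n ^ (2 * k + 2) * detEnergy A k) := by
        ring

section EnergyBound

/-- The maximum of the main term `n^(2d²)/q` and the error term `q^(d(d-1)/2) n^(d(d+1)-1)` of the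
second-moment bound for `d × d` determinants with `n = |A|` and `q = |F|`. A maximum, unlike a sum,
is propagated by the recursion for `detEnergy` without loss, see `mul_energyBound_le`. For `d = 0`
the subtraction in the second exponent is truncated; the bound is used for `1 ≤ d` only. -/
noncomputable def energyBound (q n : ℝ) (d : ℕ) : ℝ :=
  max (n ^ (2 * d ^ 2) / q) (q ^ d.choose 2 * n ^ (d * (d + 1) - 1))

variable {q n : ℝ}

lemma energyBound_le_add (hq : 0 ≤ q) (hn : 0 ≤ n) (d : ℕ) :
    energyBound q n d ≤ n ^ (2 * d ^ 2) / q + q ^ (d * (d - 1) / 2) * n ^ (d * (d + 1) - 1) := by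
  rw [← Nat.choose_two_right]
  exact max_le_add_of_nonneg (by positivity) (by positivity)

lemma main_term_le_error_term (hn : 0 ≤ n) (hq : 0 < q) (hnq : n ≤ q) (hsq : n ^ 2 ≤ q) {d : ℕ}
    (hd : 1 ≤ d) : n ^ (2 * d ^ 2) / q ≤ q ^ d.choose 2 * n ^ (d * (d + 1) - 1) := by
  have hexp : 2 * d ^ 2 = 1 + 2 * d.choose 2 + (d * (d + 1) - 1) := by
    obtain ⟨k, rfl⟩ := Nat.exists_eq_add_of_le' hd
    have hchoose : 2 * (k + 1).choose 2 = (k + 1) * k := by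
      rw [Nat.choose_two_right, Nat.mul_div_cancel' (Nat.even_mul_pred_self _).two_dvd,
        Nat.add_sub_cancel]
    rw [hchoose]
    lia
  calc n ^ (2 * d ^ 2) / q
      = n / q * (n ^ 2) ^ d.choose 2 * n ^ (d * (d + 1) - 1) := by
        rw [hexp, pow_add, pow_add, pow_one, pow_mul]
        ring
    _ ≤ 1 * q ^ d.choose 2 * n ^ (d * (d + 1) - 1) := by
        gcongr
        exact (div_le_one hq).mpr hnq
    _ = q ^ d.choose 2 * n ^ (d * (d + 1) - 1) := by rw [one_mul]

lemma mul_energyBound_le (hn : 0 ≤ n) (hq : 0 < q) (hnq : n ≤ q) {d : ℕ} (hd : 1 ≤ d) :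
    q ^ d * n ^ (2 * d + 2) * energyBound q n d ≤ energyBound q n (d + 1) := by
  have herror : q ^ d * n ^ (2 * d + 2) * (q ^ d.choose 2 * n ^ (d * (d + 1) - 1)) =
      q ^ (d + 1).choose 2 * n ^ ((d + 1) * (d + 1 + 1) - 1) := by
    have hexp : (d + 1) * (d + 1 + 1) - 1 = 2 * d + 2 + (d * (d + 1) - 1) := by
      have : 1 ≤ d * (d + 1) := Nat.mul_pos hd d.succ_pos
      rw [show (d + 1) * (d + 1 + 1) = 2 * d + 2 + d * (d + 1) by ring, Nat.add_sub_assoc this]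
    rw [hexp, Nat.choose_succ_succ' d 1, Nat.choose_one_right]
    ring
  rw [energyBound, mul_max_of_nonneg _ _ (by positivity), herror]
  refine max_le ?_ (le_max_right _ _)
  rcases le_total q (n ^ 2) with hsq | hsq
  · refine le_trans ?_ (le_max_left _ _)
    calc q ^ d * n ^ (2 * d + 2) * (n ^ (2 * d ^ 2) / q)
        ≤ (n ^ 2) ^ d * n ^ (2 * d + 2) * (n ^ (2 * d ^ 2) / q) := by gcongr
      _ = n ^ (2 * (d + 1) ^ 2) / q := by ring
  · refine le_trans ?_ (le_max_right _ _)
    rw [← herror]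
    gcongr
    exact main_term_le_error_term hn hq hnq hsq hd

end EnergyBound

lemma detEnergy_le {F : Type*} [Field F] [Fintype F] [DecidableEq F] (A : Finset F) {d : ℕ}
    (hd : 1 ≤ d) :
    (detEnergy A d : ℝ) ≤ (2 * d.factorial - 1) * energyBound (Fintype.card F) #A d := by
  have hq : (0 : ℝ) < Fintype.card F := Nat.cast_pos.mpr Fintype.card_pos
  have hnq : (#A : ℝ) ≤ Fintype.card F := Nat.cast_le.mpr (card_le_univ A)
  set q : ℝ := (Fintype.card F : ℝ)
  set n : ℝ := (#A : ℝ) with hn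
  have hn₀ : 0 ≤ n := Nat.cast_nonneg _
  induction d, hd using Nat.le_induction with
  | base =>
    calc (detEnergy A 1 : ℝ) ≤ n := Nat.cast_le.mpr (detEnergy_one_le A)
      _ ≤ energyBound q n 1 := le_max_of_le_right (by simp)
      _ = (2 * (Nat.factorial 1) - 1) * energyBound q n 1 := by norm_num
  | succ d hd ih =>
    have hbound : 0 ≤ energyBound q n (d + 1) := le_max_of_le_left (by positivity)
    have hfact : (1 : ℝ) ≤ d.factorial := by exact_mod_cast d.factorial_pos
    have hd₁ : (1 : ℝ) ≤ d := by exact_mod_cast hd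
    calc (detEnergy A (d + 1) : ℝ)
        ≤ n ^ (2 * (d + 1) ^ 2) / q + (d + 1) * (q ^ d * n ^ (2 * d + 2) * detEnergy A d) :=
          detEnergy_succ_le A d
      _ ≤ energyBound q n (d + 1) + (d + 1) * (q ^ d * n ^ (2 * d + 2) *
            ((2 * d.factorial - 1) * energyBound q n d)) := by
          gcongr
          exact le_max_left _ _
      _ = energyBound q n (d + 1) + (d + 1) * ((2 * d.factorial - 1) *
            (q ^ d * n ^ (2 * d + 2) * energyBound q n d)) := by ring
      _ ≤ energyBound q n (d + 1) +
            (d + 1) * ((2 * d.factorial - 1) * energyBound q n (d + 1)) := by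
          gcongr
          · linarith
          · exact mul_energyBound_le hn₀ hq hnq hd
      _ = (2 * (d + 1).factorial - d) * energyBound q n (d + 1) := by
          rw [Nat.factorial_succ]
          push_cast
          ring
      _ ≤ (2 * (d + 1).factorial - 1) * energyBound q n (d + 1) := by gcongr

lemma matCount_eq_card_filter {F : Type} [CommRing F] [Fintype F] [DecidableEq F] (A : Finset F)
    (d : ℕ) (t : F) :
    matCount F d A t = #{M ∈ matricesOver A (Fin d) (Fin d) | M.det = t} := by
  rw [matCount, ← Nat.card_eq_finsetCard]
  exact Nat.card_congr (Equiv.subtypeEquivRight fun M => by simp [mem_matricesOver])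

lemma sum_sq_matCount {F : Type} [CommRing F] [Fintype F] [DecidableEq F] (A : Finset F) (d : ℕ) :
    ∑ l ∈ univ.filter (fun l : F => l ≠ 0), matCount F d A l ^ 2 = detEnergy A d := by
  rw [detEnergy, ← sum_sq_card_fiber (T := univ.filter (fun l : F => l ≠ 0)) (by simp)]
  refine sum_congr rfl fun l hl => ?_
  rw [matCount_eq_card_filter, filter_filter]
  congr 2
  exact filter_congr fun M _ => ⟨fun h => ⟨h ▸ (mem_filter.mp hl).2, h⟩, And.right⟩

end DetEnergy

theorem stmt_8_general {F : Type} [Field F] [Fintype F] [DecidableEq F] (A : Finset F) {d : ℕ}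
    (hd : 1 ≤ d) :
    ∑ l ∈ Finset.univ.filter (fun l : F => l ≠ 0), (matCount F d A l : ℝ) ^ 2 ≤
      2 * d.factorial * ((A.card : ℝ) ^ (2 * d ^ 2) / (Fintype.card F : ℝ) +
        (Fintype.card F : ℝ) ^ (d * (d - 1) / 2) * (A.card : ℝ) ^ (d * (d + 1) - 1)) := by
  calc ∑ l ∈ Finset.univ.filter (fun l : F => l ≠ 0), (matCount F d A l : ℝ) ^ 2
      = DetEnergy.detEnergy A d := by exact_mod_cast DetEnergy.sum_sq_matCount A d
    _ ≤ (2 * d.factorial - 1) * DetEnergy.energyBound (Fintype.card F) A.card d :=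
        DetEnergy.detEnergy_le A hd
    _ ≤ 2 * d.factorial * _ := by
        gcongr
        · exact le_max_of_le_left (by positivity)
        · linarith
        · exact DetEnergy.energyBound_le_add (by positivity) (by positivity) d

theorem stmt_8 (d : ℕ) (hd : 2 ≤ d) :
    ∃ C : ℝ, 0 < C ∧
      ∀ (F : Type) [Field F] [Fintype F] [DecidableEq F], Odd (Fintype.card F) →
        ∀ A : Finset F,
          ∑ l ∈ Finset.univ.filter (fun l : F => l ≠ 0), (matCount F d A l : ℝ) ^ 2 ≤
            C * ((A.card : ℝ) ^ (2 * d ^ 2) / (Fintype.card F : ℝ) +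
              (Fintype.card F : ℝ) ^ (d * (d - 1) / 2) * (A.card : ℝ) ^ (d * (d + 1) - 1)) :=
  ⟨2 * d.factorial, by positivity, fun _ _ _ _ _ A => stmt_8_general A (by lia)⟩
end
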